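/- arXiv:1112.0813 — 2 statements merged into one kernel-verified Lean document; each statement's English description precedes it below -/
import Mathlib

section
/- Let g : ℝ → ℝ be smooth with g, g', g'' ∈ L²(ℝ) and ‖ε g'‖_{L∞} ≤ 1/2. With c(ξ,ξ̃) = (g(ξ)-g(ξ̃))/(ξ-ξ̃), the double integral I₁ = ∫∫ Ψ''(c; ε) c_ξ g''(ξ)² dξ dξ̃, where Ψ''(c;ε) = c/(1-εc)², satisfies |I₁| ≤ (32/3) ‖g'‖_{L²} ‖g''‖_{L²}³. -/
open MeasureTheory

/-- Scaling plus translation for the Lebesgue integral. -/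
lemma aux_scale (f : ℝ → ENNReal) (hf : Measurable f) (ξ s : ℝ) (hs : 0 < s) :
    ∫⁻ h : ℝ, f (ξ + s * h) = ENNReal.ofReal (s⁻¹) * ∫⁻ x : ℝ, f x := by
  have h1 : ∫⁻ h : ℝ, f (ξ + s * h) = ∫⁻ y, f (ξ + y) ∂(Measure.map (fun x => s * x) volume) := by
    rw [lintegral_map (by fun_prop) (by fun_prop)]
  rw [h1, Real.map_volume_mul_left hs.ne', lintegral_smul_measure,
    lintegral_add_left_eq_self (fun y => f y) ξ, abs_of_pos (inv_pos.mpr hs), smul_eq_mul]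

lemma aux_sqrt (f : ℝ → ℝ) (hf : Continuous f) (hi : Integrable (fun x => (f x) ^ 2))
    (ξ s : ℝ) (hs : 0 < s) :
    (∫⁻ h : ℝ, ‖f (ξ + s * h)‖ₑ ^ (2 : ℝ)) ^ (1 / 2 : ℝ) =
      ENNReal.ofReal (s ^ (-(1 / 2) : ℝ)) * ENNReal.ofReal (Real.sqrt (∫ x : ℝ, (f x) ^ 2)) := by
  rw [aux_scale (fun x => ‖f x‖ₑ ^ (2 : ℝ)) (by fun_prop) ξ s hs,
    ENNReal.mul_rpow_of_nonneg _ _ (by norm_num)]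
  congr 1
  · rw [ENNReal.ofReal_rpow_of_pos (by positivity), Real.rpow_neg hs.le, Real.inv_rpow hs.le]
  · have : ∫⁻ x, ‖f x‖ₑ ^ (2 : ℝ) = ENNReal.ofReal (∫ x : ℝ, (f x) ^ 2) := by
      rw [ofReal_integral_eq_lintegral_ofReal hi (Filter.Eventually.of_forall fun x => sq_nonneg _)]
      congr 1
      ext x
      rw [Real.enorm_eq_ofReal_abs, ENNReal.ofReal_rpow_of_nonneg (abs_nonneg _) (by norm_num)]
      norm_num
    rw [this, ENNReal.ofReal_rpow_of_nonneg (integral_nonneg fun x => sq_nonneg _) (by norm_num),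
      Real.sqrt_eq_rpow]

lemma aux_cs (f k : ℝ → ℝ) (hf : Continuous f) (hi : Integrable (fun x => (f x) ^ 2))
    (hk : Continuous k) (hki : Integrable (fun x => (k x) ^ 2))
    (ξ s r : ℝ) (hs : 0 < s) (hr : 0 < r) :
    ∫⁻ h : ℝ, ‖f (ξ + s * h)‖ₑ * ‖k (ξ + r * h)‖ₑ ≤
      (ENNReal.ofReal (s ^ (-(1 / 2) : ℝ)) * ENNReal.ofReal (Real.sqrt (∫ x : ℝ, (f x) ^ 2))) *
      (ENNReal.ofReal (r ^ (-(1 / 2) : ℝ)) * ENNReal.ofReal (Real.sqrt (∫ x : ℝ, (k x) ^ 2))) := by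
  rw [← aux_sqrt f hf hi ξ s hs, ← aux_sqrt k hk hki ξ r hr]
  exact ENNReal.lintegral_mul_le_Lp_mul_Lq volume Real.HolderConjugate.two_two
    (by fun_prop) (by fun_prop)

lemma aux_w1 : ∫⁻ s in Set.Ioc (0:ℝ) 1, ENNReal.ofReal (s ^ (-(1 / 2) : ℝ)) = ENNReal.ofReal 2 := by
  rw [← ofReal_integral_eq_lintegral_ofReal]
  · rw [← intervalIntegral.integral_of_le zero_le_one, integral_rpow (by norm_num)]
    norm_num
  · rw [← IntegrableOn, ← intervalIntegrable_iff_integrableOn_Ioc_of_le zero_le_one]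
    exact intervalIntegral.intervalIntegrable_rpow' (by norm_num)
  · filter_upwards [ae_restrict_mem measurableSet_Ioc] with s hs
    exact Real.rpow_nonneg hs.1.le _

lemma aux_w2 : ∫⁻ s in Set.Ioc (0:ℝ) 1, ENNReal.ofReal (1 - s) * ENNReal.ofReal (s ^ (-(1 / 2) : ℝ))
    = ENNReal.ofReal (4 / 3) := by
  have h0 : ∫⁻ s in Set.Ioc (0:ℝ) 1, ENNReal.ofReal (1 - s) * ENNReal.ofReal (s ^ (-(1 / 2) : ℝ))
    = ∫⁻ s in Set.Ioc (0:ℝ) 1, ENNReal.ofReal (s ^ (-(1 / 2) : ℝ) - s ^ ((1 / 2) : ℝ)) := by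
    refine setLIntegral_congr_fun measurableSet_Ioc fun s hs => ?_
    rw [← ENNReal.ofReal_mul (by linarith [hs.2])]
    congr 1
    have : s ^ ((1 / 2) : ℝ) = s * s ^ (-(1 / 2) : ℝ) := by
      rw [← Real.rpow_one_add' hs.1.le (by norm_num)]; norm_num
    rw [this]; ring
  have i1 : IntervalIntegrable (fun s : ℝ => s ^ (-(1 / 2) : ℝ)) volume 0 1 :=
    intervalIntegral.intervalIntegrable_rpow' (by norm_num)
  have i2 : IntervalIntegrable (fun s : ℝ => s ^ ((1 / 2) : ℝ)) volume 0 1 :=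
    intervalIntegral.intervalIntegrable_rpow' (by norm_num)
  rw [h0, ← ofReal_integral_eq_lintegral_ofReal]
  · rw [← intervalIntegral.integral_of_le zero_le_one, intervalIntegral.integral_sub i1 i2,
      integral_rpow (by norm_num), integral_rpow (by norm_num)]
    norm_num
  · rw [← IntegrableOn, ← intervalIntegrable_iff_integrableOn_Ioc_of_le zero_le_one]
    exact i1.sub i2
  · filter_upwards [ae_restrict_mem measurableSet_Ioc] with s hs
    simp only [Pi.zero_apply, sub_nonneg]
    exact Real.rpow_le_rpow_of_exponent_ge hs.1 hs.2 (by norm_num)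

lemma aux_main (f k : ℝ → ℝ) (hf : Continuous f) (hi : Integrable (fun x => (f x) ^ 2))
    (hk : Continuous k) (hki : Integrable (fun x => (k x) ^ 2)) (ξ : ℝ) :
    ∫⁻ h : ℝ, (∫⁻ s in Set.Ioc (0:ℝ) 1, ‖f (ξ + s * h)‖ₑ) *
      (∫⁻ r in Set.Ioc (0:ℝ) 1, ENNReal.ofReal (1 - r) * ‖k (ξ + r * h)‖ₑ) ≤
    ENNReal.ofReal (8 / 3 * Real.sqrt (∫ x : ℝ, (f x) ^ 2) * Real.sqrt (∫ x : ℝ, (k x) ^ 2)) := by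
  have hfm := hf.measurable
  have hkm := hk.measurable
  set A := ENNReal.ofReal (Real.sqrt (∫ x : ℝ, (f x) ^ 2)) with hA
  set B := ENNReal.ofReal (Real.sqrt (∫ x : ℝ, (k x) ^ 2)) with hB
  calc _ = ∫⁻ h : ℝ, ∫⁻ s in Set.Ioc (0:ℝ) 1, ∫⁻ r in Set.Ioc (0:ℝ) 1,
        ENNReal.ofReal (1 - r) * (‖f (ξ + s * h)‖ₑ * ‖k (ξ + r * h)‖ₑ) := by
        congr 1; ext h
        rw [← lintegral_mul_const _ (by fun_prop)]
        congr 1; ext s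
        rw [← lintegral_const_mul _ (by fun_prop)]
        congr 1; ext r
        ring
    _ = ∫⁻ s in Set.Ioc (0:ℝ) 1, ∫⁻ h : ℝ, ∫⁻ r in Set.Ioc (0:ℝ) 1,
        ENNReal.ofReal (1 - r) * (‖f (ξ + s * h)‖ₑ * ‖k (ξ + r * h)‖ₑ) := by
        rw [lintegral_lintegral_swap]
        refine Measurable.aemeasurable ?_
        refine Measurable.lintegral_prod_right' (f := fun p : (ℝ × ℝ) × ℝ =>
          ENNReal.ofReal (1 - p.2) * (‖f (ξ + p.1.2 * p.1.1)‖ₑ * ‖k (ξ + p.2 * p.1.1)‖ₑ)) ?_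
        fun_prop
    _ = ∫⁻ s in Set.Ioc (0:ℝ) 1, ∫⁻ r in Set.Ioc (0:ℝ) 1, ENNReal.ofReal (1 - r) *
          ∫⁻ h : ℝ, (‖f (ξ + s * h)‖ₑ * ‖k (ξ + r * h)‖ₑ) := by
        congr 1; ext s
        rw [lintegral_lintegral_swap (by fun_prop)]
        congr 1; ext r
        rw [lintegral_const_mul _ (by fun_prop)]
    _ ≤ ∫⁻ s in Set.Ioc (0:ℝ) 1, ∫⁻ r in Set.Ioc (0:ℝ) 1, ENNReal.ofReal (1 - r) *
          ((ENNReal.ofReal (s ^ (-(1 / 2) : ℝ)) * A) *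
            (ENNReal.ofReal (r ^ (-(1 / 2) : ℝ)) * B)) := by
        refine setLIntegral_mono' measurableSet_Ioc fun s hs => ?_
        refine setLIntegral_mono' measurableSet_Ioc fun r hr => ?_
        gcongr
        exact aux_cs f k hf hi hk hki ξ s r hs.1 hr.1
    _ = ∫⁻ s in Set.Ioc (0:ℝ) 1, ENNReal.ofReal (s ^ (-(1 / 2) : ℝ)) *
          (A * B * ENNReal.ofReal (4 / 3)) := by
        congr 1; ext s
        rw [← aux_w2, ← mul_assoc, ← lintegral_const_mul _ (by fun_prop)]
        congr 1; ext r
        ring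
    _ = _ := by
        rw [lintegral_mul_const _ (by fun_prop), aux_w1, hA, hB,
          ← ENNReal.ofReal_mul (by positivity), ← ENNReal.ofReal_mul (by positivity),
          ← ENNReal.ofReal_mul (by positivity)]
        congr 1; ring

lemma aux_c (g : ℝ → ℝ) (hg : ContDiff ℝ (⊤ : ℕ∞) g) (ξ h : ℝ) (hh : h ≠ 0) :
    (g ξ - g (ξ + h)) / (ξ - (ξ + h)) = ∫ s in Set.Ioc (0:ℝ) 1, deriv g (ξ + s * h) := by
  have hd : Differentiable ℝ g := hg.differentiable (by simp)
  have hc : Continuous (deriv g) := hg.continuous_deriv (by simp)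
  rw [← intervalIntegral.integral_of_le zero_le_one]
  have key : ∫ s in (0:ℝ)..1, deriv g (ξ + s * h) * h = g (ξ + 1 * h) - g (ξ + 0 * h) := by
    refine intervalIntegral.integral_eq_sub_of_hasDerivAt (f := fun s => g (ξ + s * h))
      (fun s _ => ?_) (Continuous.intervalIntegrable (by fun_prop) _ _)
    have h2 : HasDerivAt (fun s : ℝ => ξ + s * h) h s := by
      simpa using ((hasDerivAt_id s).mul_const h).const_add ξ
    exact (hd (ξ + s * h)).hasDerivAt.comp s h2
  rw [intervalIntegral.integral_mul_const] at key
  rw [div_eq_iff (by simpa using hh)]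
  simp only [one_mul, zero_mul, add_zero] at key
  linarith

lemma aux_cx (g : ℝ → ℝ) (hg : ContDiff ℝ (⊤ : ℕ∞) g) (ξ h : ℝ) (hh : h ≠ 0) :
    (deriv g ξ * (ξ - (ξ + h)) - (g ξ - g (ξ + h))) / (ξ - (ξ + h)) ^ 2 =
      ∫ s in Set.Ioc (0:ℝ) 1, (1 - s) * deriv (deriv g) (ξ + s * h) := by
  have hd : Differentiable ℝ g := hg.differentiable (by simp)
  have hg1 : ContDiff ℝ (⊤ : ℕ∞) (deriv g) := (contDiff_infty_iff_deriv.mp hg).2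
  have hd1 : Differentiable ℝ (deriv g) := hg1.differentiable (by simp)
  have hc : Continuous (deriv (deriv g)) := hg1.continuous_deriv (by simp)
  rw [← intervalIntegral.integral_of_le zero_le_one]
  have key : ∫ s in (0:ℝ)..1, ((1 - s) * deriv (deriv g) (ξ + s * h)) * h ^ 2 =
      ((1 - 1) * h * deriv g (ξ + 1 * h) + g (ξ + 1 * h)) -
      ((1 - 0) * h * deriv g (ξ + 0 * h) + g (ξ + 0 * h)) := by
    refine intervalIntegral.integral_eq_sub_of_hasDerivAt
      (f := fun s => (1 - s) * h * deriv g (ξ + s * h) + g (ξ + s * h))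
      (fun s _ => ?_) (Continuous.intervalIntegrable (by fun_prop) _ _)
    have h2 : HasDerivAt (fun s : ℝ => ξ + s * h) h s := by
      simpa using ((hasDerivAt_id s).mul_const h).const_add ξ
    have h3 := (hd (ξ + s * h)).hasDerivAt.comp s h2
    have h4 := (hd1 (ξ + s * h)).hasDerivAt.comp s h2
    have h5 : HasDerivAt (fun s : ℝ => (1 - s) * h) (-h) s := by
      simpa using ((hasDerivAt_id s).const_sub 1).mul_const h
    convert (h5.mul h4).add h3 using 1
    · rfl
    · simp only [Function.comp_apply]
      ring
  rw [intervalIntegral.integral_mul_const] at key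
  rw [div_eq_iff (by simpa using hh)]
  simp only [one_mul, zero_mul, add_zero] at key
  linear_combination -key

lemma aux_psi (ε : ℝ) (g : ℝ → ℝ) (hd : Differentiable ℝ g)
    (hsmall : ∀ x : ℝ, |ε * deriv g x| ≤ 1 / 2) (x y : ℝ) :
    |((g x - g y) / (x - y)) / (1 - ε * ((g x - g y) / (x - y))) ^ 2| ≤
      4 * |(g x - g y) / (x - y)| := by
  have hb : |ε * ((g x - g y) / (x - y))| ≤ 1 / 2 := by
    have := Convex.norm_image_sub_le_of_norm_deriv_le (f := fun x => ε * g x) (C := 1 / 2)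
      (s := Set.univ) (x := y) (y := x) (fun z _ => (hd z).const_mul ε) (fun z _ => by
        rw [deriv_const_mul _ (hd z)]; exact hsmall z) convex_univ trivial trivial
    rw [Real.norm_eq_abs, Real.norm_eq_abs, ← mul_sub] at this
    rw [← mul_div_assoc, abs_div]
    exact div_le_of_le_mul₀ (abs_nonneg _) (by norm_num) this
  set c := (g x - g y) / (x - y)
  have h1 : 1 / 4 ≤ (1 - ε * c) ^ 2 := by
    have := (abs_le.mp hb).2
    nlinarith
  rw [abs_div, abs_of_nonneg (sq_nonneg (1 - ε * c)), div_le_iff₀ (by linarith)]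
  nlinarith [abs_nonneg c]

lemma aux_inner (ε : ℝ) (g : ℝ → ℝ)
    (hg : ContDiff ℝ (⊤ : ℕ∞) g)
    (hg'L2 : Integrable (fun x => (deriv g x) ^ 2))
    (hg''L2 : Integrable (fun x => (deriv (deriv g) x) ^ 2))
    (hsmall : ∀ x : ℝ, |ε * deriv g x| ≤ 1 / 2) (ξ : ℝ) :
    ‖∫ t : ℝ,
        (((g ξ - g t) / (ξ - t)) / (1 - ε * ((g ξ - g t) / (ξ - t))) ^ 2) *
          ((deriv g ξ * (ξ - t) - (g ξ - g t)) / (ξ - t) ^ 2)‖ ≤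
      32 / 3 * Real.sqrt (∫ x : ℝ, (deriv g x) ^ 2) *
        Real.sqrt (∫ x : ℝ, (deriv (deriv g) x) ^ 2) := by
  have hd : Differentiable ℝ g := hg.differentiable (by simp)
  have hc : Continuous (deriv g) := hg.continuous_deriv (by simp)
  have hg1 : ContDiff ℝ (⊤ : ℕ∞) (deriv g) := (contDiff_infty_iff_deriv.mp hg).2
  have hc1 : Continuous (deriv (deriv g)) := hg1.continuous_deriv (by simp)
  rw [← integral_add_left_eq_self _ ξ]
  rw [← ENNReal.ofReal_le_ofReal_iff (by positivity), ofReal_norm]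
  refine (enorm_integral_le_lintegral_enorm _).trans ?_
  have hae : ∀ᵐ h : ℝ, h ≠ 0 := by simp [ae_iff]
  calc _ ≤ ∫⁻ h : ℝ, 4 * ((∫⁻ s in Set.Ioc (0:ℝ) 1, ‖deriv g (ξ + s * h)‖ₑ) *
      (∫⁻ r in Set.Ioc (0:ℝ) 1, ENNReal.ofReal (1 - r) * ‖deriv (deriv g) (ξ + r * h)‖ₑ)) := by
        refine lintegral_mono_ae ?_
        filter_upwards [hae] with h hh
        rw [enorm_mul, ← mul_assoc]
        gcongr
        · have hp := aux_psi ε g hd hsmall ξ (ξ + h)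
          rw [Real.enorm_eq_ofReal_abs]
          refine (ENNReal.ofReal_le_ofReal hp).trans ?_
          rw [ENNReal.ofReal_mul (by norm_num), ← Real.enorm_eq_ofReal_abs, aux_c g hg ξ h hh]
          gcongr
          · norm_num
          · exact enorm_integral_le_lintegral_enorm _
        · rw [aux_cx g hg ξ h hh]
          refine (enorm_integral_le_lintegral_enorm _).trans ?_
          refine setLIntegral_mono' measurableSet_Ioc fun r hr => ?_
          rw [enorm_mul, Real.enorm_of_nonneg (by linarith [hr.2])]
    _ = 4 * ∫⁻ h : ℝ, ((∫⁻ s in Set.Ioc (0:ℝ) 1, ‖deriv g (ξ + s * h)‖ₑ) *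
      (∫⁻ r in Set.Ioc (0:ℝ) 1, ENNReal.ofReal (1 - r) * ‖deriv (deriv g) (ξ + r * h)‖ₑ)) :=
        lintegral_const_mul' _ _ (by norm_num)
    _ ≤ 4 * ENNReal.ofReal (8 / 3 * Real.sqrt (∫ x : ℝ, (deriv g x) ^ 2) *
          Real.sqrt (∫ x : ℝ, (deriv (deriv g) x) ^ 2)) :=
        mul_le_mul_right (aux_main _ _ hc hg'L2 hc1 hg''L2 ξ) _
    _ = _ := by
        rw [show (4 : ENNReal) = ENNReal.ofReal 4 by norm_num, ← ENNReal.ofReal_mul (by norm_num)]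
        congr 1; ring

theorem I1_estimate (ε : ℝ) (g : ℝ → ℝ)
    (hg : ContDiff ℝ (⊤ : ℕ∞) g)
    (hgL2 : Integrable (fun x => (g x) ^ 2))
    (hg'L2 : Integrable (fun x => (deriv g x) ^ 2))
    (hg''L2 : Integrable (fun x => (deriv (deriv g) x) ^ 2))
    (hsmall : ∀ x : ℝ, |ε * deriv g x| ≤ 1 / 2) :
    |∫ ξ : ℝ, ∫ t : ℝ,
        (((g ξ - g t) / (ξ - t)) / (1 - ε * ((g ξ - g t) / (ξ - t))) ^ 2) *
          ((deriv g ξ * (ξ - t) - (g ξ - g t)) / (ξ - t) ^ 2) *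
          (deriv (deriv g) ξ) ^ 2| ≤
      (32 / 3) * Real.sqrt (∫ x : ℝ, (deriv g x) ^ 2) *
        (Real.sqrt (∫ x : ℝ, (deriv (deriv g) x) ^ 2)) ^ 3 := by
  set C := 32 / 3 * Real.sqrt (∫ x : ℝ, (deriv g x) ^ 2) *
        Real.sqrt (∫ x : ℝ, (deriv (deriv g) x) ^ 2) with hC
  rw [← Real.norm_eq_abs]
  refine (norm_integral_le_of_norm_le (hg''L2.const_mul C)
    (Filter.Eventually.of_forall fun ξ => ?_)).trans ?_
  · rw [integral_mul_const, norm_mul, Real.norm_of_nonneg (sq_nonneg (deriv (deriv g) ξ))]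
    exact mul_le_mul_of_nonneg_right (aux_inner ε g hg hg'L2 hg''L2 hsmall ξ) (sq_nonneg _)
  · rw [integral_const_mul]
    have h0 : 0 ≤ ∫ x : ℝ, (deriv (deriv g) x) ^ 2 := integral_nonneg fun x => sq_nonneg _
    have h1 := Real.sq_sqrt h0
    apply le_of_eq
    rw [hC]
    linear_combination (-(32 / 3 * Real.sqrt (∫ x : ℝ, (deriv g x) ^ 2) *
        Real.sqrt (∫ x : ℝ, (deriv (deriv g) x) ^ 2))) * h1
end

section
/- Let g(t, ·) : ℝ → ℝ be a smooth rapidly decaying solution of the equation g_t(ξ) = H[g](ξ) - (ε²/π) ∂_ξ ∫_ℝ (ξ - ξ̃) g_ξ̃(ξ̃) φ((g(ξ)-g(ξ̃))/(ξ-ξ̃); ε) dξ̃, where H is the Hilbert transform and φ(c;ε) = -(1/ε²)(log(1-εc)+εc), with ‖ε g_ξ(t,·)‖_{L∞} ≤ 1/2 on a time interval. Then the L² norm ∫_ℝ g(t,ξ)² dξ is constant in t. -/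
open MeasureTheory Filter

/-- `h` is the Hilbert transform of `u`, defined pointwise as a principal value. -/
def IsHilbertTransform (u h : ℝ → ℝ) : Prop :=
  ∀ x : ℝ,
    Tendsto (fun δ : ℝ => (1 / Real.pi) * ∫ y in {y : ℝ | δ < |x - y|}, u y / (x - y))
      (nhdsWithin 0 (Set.Ioi 0)) (nhds (h x))

/-! ### Scalar functions -/

noncomputable def mph (c : ℝ) : ℝ := Real.log (1 - c) + c
noncomputable def mpsi (c : ℝ) : ℝ := -(1 - c) * Real.log (1 - c) - c + c ^ 2 / 2
noncomputable def mm (c : ℝ) : ℝ := (2 - c) * Real.log (1 - c) + 2 * c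
noncomputable def mm1 (c : ℝ) : ℝ := -Real.log (1 - c) - c / (1 - c)
noncomputable def mM (c : ℝ) : ℝ :=
  c ^ 2 - (((1 - c) + (1 - c) ^ 2 / 2) * Real.log (1 - c) - (1 - c) - (1 - c) ^ 2 / 4) - 5 / 4

lemma one_sub_pos {c : ℝ} (hc : |c| ≤ 1 / 2) : 0 < 1 - c := by
  have := abs_le.1 hc; linarith [this.2]

lemma mph_deriv {c : ℝ} (hc : |c| ≤ 1 / 2) : HasDerivAt mph (-c / (1 - c)) c := by
  have h0 := one_sub_pos hc
  have h1 : HasDerivAt (fun c : ℝ => 1 - c) (-1) c := by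
    simpa using (hasDerivAt_id c).const_sub 1
  have h := (h1.log h0.ne').add (hasDerivAt_id c)
  refine HasDerivAt.congr_deriv h ?_
  field_simp; ring

lemma mpsi_deriv {c : ℝ} (hc : |c| ≤ 1 / 2) : HasDerivAt mpsi (mph c) c := by
  have h0 := one_sub_pos hc
  have h1 : HasDerivAt (fun c : ℝ => 1 - c) (-1) c := by
    simpa using (hasDerivAt_id c).const_sub 1
  have h := (((h1.neg).mul (h1.log h0.ne')).sub (hasDerivAt_id c)).add
    (((hasDerivAt_id c).pow 2).div_const 2)
  refine HasDerivAt.congr_deriv h ?_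
  simp [mph]
  field_simp; ring

lemma mm1_deriv {c : ℝ} (hc : |c| ≤ 1 / 2) : HasDerivAt mm1 (-c / (1 - c) ^ 2) c := by
  have h0 := one_sub_pos hc
  have h1 : HasDerivAt (fun c : ℝ => 1 - c) (-1) c := by
    simpa using (hasDerivAt_id c).const_sub 1
  have h := (h1.log h0.ne').neg.sub ((hasDerivAt_id c).div h1 h0.ne')
  refine HasDerivAt.congr_deriv h ?_
  simp
  field_simp; ring

lemma mm_deriv {c : ℝ} (hc : |c| ≤ 1 / 2) : HasDerivAt mm (mm1 c) c := by
  have h0 := one_sub_pos hc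
  have h1 : HasDerivAt (fun c : ℝ => 1 - c) (-1) c := by
    simpa using (hasDerivAt_id c).const_sub 1
  have h2 : HasDerivAt (fun c : ℝ => 2 - c) (-1) c := by
    simpa using (hasDerivAt_id c).const_sub 2
  have h := (h2.mul (h1.log h0.ne')).add ((hasDerivAt_id c).const_mul 2)
  refine HasDerivAt.congr_deriv h ?_
  simp [mm1]
  field_simp; ring

lemma mM_deriv {c : ℝ} (hc : |c| ≤ 1 / 2) : HasDerivAt mM (mm c) c := by
  have h0 := one_sub_pos hc
  have h1 : HasDerivAt (fun c : ℝ => 1 - c) (-1) c := by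
    simpa using (hasDerivAt_id c).const_sub 1
  have h := (((hasDerivAt_id c).pow 2).sub ((((h1.add ((h1.pow 2).div_const 2)).mul
    (h1.log h0.ne')).sub h1).sub ((h1.pow 2).div_const 4))).sub_const (5 / 4)
  refine HasDerivAt.congr_deriv h ?_
  simp [mm]
  field_simp; ring

lemma pow_bound {F F' : ℝ → ℝ} {K : ℝ} {n : ℕ} (hF0 : F 0 = 0)
    (hd : ∀ c, |c| ≤ 1 / 2 → HasDerivAt F (F' c) c)
    (hb : ∀ c, |c| ≤ 1 / 2 → |F' c| ≤ K * |c| ^ n) (hK : 0 ≤ K) {c : ℝ} (hc : |c| ≤ 1 / 2) :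
    |F c| ≤ K * |c| ^ (n + 1) := by
  have h := (convex_Icc (-|c|) |c|).norm_image_sub_le_of_norm_hasDerivWithin_le
    (f := F) (f' := F') (C := K * |c| ^ n) (x := 0) (y := c)
    (fun x hx => (hd x ((abs_le.2 hx).trans hc)).hasDerivWithinAt)
    (fun x hx => by
      have hx' := abs_le.2 hx
      refine (hb x (hx'.trans hc)).trans ?_
      gcongr)
    ⟨by simp, by simp⟩ ⟨neg_abs_le c, le_abs_self c⟩
  simp only [hF0, sub_zero, Real.norm_eq_abs] at h
  rw [pow_succ]; linarith

lemma mph_bound {c : ℝ} (hc : |c| ≤ 1 / 2) : |mph c| ≤ 4 * |c| ^ 2 := by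
  refine pow_bound (n := 1) (by simp [mph]) (fun c hc => mph_deriv hc) ?_ (by norm_num) hc
  intro c hc
  have h0 := one_sub_pos hc
  have : 1 / 2 ≤ 1 - c := by have := abs_le.1 hc; linarith [this.2]
  rw [abs_div, abs_neg, abs_of_pos h0, div_le_iff₀ h0, pow_one]
  nlinarith [abs_nonneg c]

lemma mpsi_bound {c : ℝ} (hc : |c| ≤ 1 / 2) : |mpsi c| ≤ 4 * |c| ^ 3 :=
  pow_bound (n := 2) (by simp [mpsi]) (fun c hc => mpsi_deriv hc) (fun _ h => mph_bound h)
    (by norm_num) hc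

lemma mm1_bound {c : ℝ} (hc : |c| ≤ 1 / 2) : |mm1 c| ≤ 4 * |c| ^ 2 := by
  refine pow_bound (n := 1) (by simp [mm1]) (fun c hc => mm1_deriv hc) ?_ (by norm_num) hc
  intro c hc
  have h0 := one_sub_pos hc
  have : 1 / 2 ≤ 1 - c := by have := abs_le.1 hc; linarith [this.2]
  rw [abs_div, abs_neg, abs_of_pos (by positivity : 0 < (1 - c) ^ 2), div_le_iff₀ (by positivity),
    pow_one]
  nlinarith [abs_nonneg c, mul_nonneg (abs_nonneg c) (by nlinarith : 0 ≤ 4 * (1 - c) ^ 2 - 1)]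

lemma mm_bound {c : ℝ} (hc : |c| ≤ 1 / 2) : |mm c| ≤ 4 * |c| ^ 3 :=
  pow_bound (n := 2) (by simp [mm]) (fun c hc => mm_deriv hc) (fun _ h => mm1_bound h)
    (by norm_num) hc

lemma mM_bound {c : ℝ} (hc : |c| ≤ 1 / 2) : |mM c| ≤ 4 * |c| ^ 4 :=
  pow_bound (n := 3) (by simp [mM]; norm_num) (fun c hc => mM_deriv hc) (fun _ h => mm_bound h)
    (by norm_num) hc

lemma mph_mm (c : ℝ) : mm c = c * mph c - 2 * mpsi c := by
  simp only [mm, mph, mpsi]; ring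

@[fun_prop] lemma mph_meas : Measurable mph := by unfold mph; fun_prop
@[fun_prop] lemma mm_meas : Measurable mm := by unfold mm; fun_prop
@[fun_prop] lemma mm1_meas : Measurable mm1 := by unfold mm1; fun_prop
@[fun_prop] lemma mM_meas : Measurable mM := by unfold mM; fun_prop

/-! ### Fixed-time analysis -/

noncomputable def cq (f : ℝ → ℝ) (x z : ℝ) : ℝ := (f x - f (x - z)) / z

structure Nice (f f' : ℝ → ℝ) (S : ℝ) : Prop where
  der : ∀ x, HasDerivAt f (f' x) x
  cont' : Continuous f'
  b' : ∀ x, |f' x| ≤ 1 / 2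
  bS : ∀ x, |f x| ≤ S
  S1 : 1 ≤ S
  int : Integrable f
  int' : Integrable f'

namespace Nice

variable {f f' : ℝ → ℝ} {S : ℝ}

lemma cont (h : Nice f f' S) : Continuous f :=
  continuous_iff_continuousAt.2 fun x => (h.der x).continuousAt

lemma lip (h : Nice f f' S) (a b : ℝ) : |f a - f b| ≤ 1 / 2 * |a - b| := by
  have := convex_univ.norm_image_sub_le_of_norm_hasDerivWithin_le
    (f := f) (f' := f') (C := 1 / 2) (x := b) (y := a)
    (fun x _ => (h.der x).hasDerivWithinAt) (fun x _ => h.b' x) (Set.mem_univ _) (Set.mem_univ _)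
  simpa using this

lemma S0 (h : Nice f f' S) : 0 < S := by linarith [h.S1]

lemma diff_le (h : Nice f f' S) (a b : ℝ) : |f a - f b| ≤ 2 * S := by
  have := abs_sub (f a) (f b)
  linarith [h.bS a, h.bS b]

lemma cq_half (h : Nice f f' S) (x z : ℝ) : |cq f x z| ≤ 1 / 2 := by
  rcases eq_or_ne z 0 with rfl | hz
  · simp [cq]
  · rw [cq, abs_div, div_le_iff₀ (abs_pos.2 hz)]
    simpa using h.lip x (x - z)

lemma cq_mul (x z : ℝ) : z * cq f x z = f x - f (x - z) := by
  rcases eq_or_ne z 0 with rfl | hz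
  · simp [cq]
  · rw [cq]; field_simp

lemma cq_sq (h : Nice f f' S) (x z : ℝ) : |cq f x z| ^ 2 ≤ 5 * S ^ 2 * (1 + z ^ 2)⁻¹ := by
  have hk : 0 < 1 + z ^ 2 := by positivity
  rw [← div_eq_mul_inv, le_div_iff₀ hk]
  have h1 := h.cq_half x z
  have h2 : |z| * |cq f x z| ≤ 2 * S := by
    rw [← abs_mul, cq_mul]; exact h.diff_le _ _
  have h3 : (|z| * |cq f x z|) ^ 2 ≤ (2 * S) ^ 2 := by gcongr
  have h4 : |cq f x z| ^ 2 ≤ (1 / 2) ^ 2 := by gcongr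
  have := h.S1
  nlinarith [sq_abs z]

lemma zmm_bound' (h : Nice f f' S) (x z : ℝ) :
    |z * mm (cq f x z)| ≤ 4 * |f x - f (x - z)| * |cq f x z| ^ 2 := by
  rw [abs_mul, ← cq_mul, abs_mul]
  have := mm_bound (h.cq_half x z)
  calc |z| * |mm (cq f x z)| ≤ |z| * (4 * |cq f x z| ^ 3) := by gcongr
    _ = _ := by ring

lemma zmm_bound (h : Nice f f' S) (x z : ℝ) :
    |z * mm (cq f x z)| ≤ 40 * S ^ 3 * (1 + z ^ 2)⁻¹ := by
  have h0 := h.S0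
  have hk : 0 < (1 + z ^ 2)⁻¹ := by positivity
  calc _ ≤ 4 * |f x - f (x - z)| * |cq f x z| ^ 2 := h.zmm_bound' x z
    _ ≤ 4 * (2 * S) * (5 * S ^ 2 * (1 + z ^ 2)⁻¹) := by
      gcongr
      · exact h.diff_le _ _
      · exact h.cq_sq _ _
    _ = _ := by ring

lemma mm1_bd (h : Nice f f' S) (x z : ℝ) :
    |mm1 (cq f x z) * (f' x - f' (x - z))| ≤ 20 * S ^ 2 * (1 + z ^ 2)⁻¹ := by
  have h1 : |f' x - f' (x - z)| ≤ 1 := by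
    have := abs_sub (f' x) (f' (x - z))
    linarith [h.b' x, h.b' (x - z)]
  rw [abs_mul]
  calc _ ≤ 4 * (5 * S ^ 2 * (1 + z ^ 2)⁻¹) * 1 := by
        gcongr
        exact (mm1_bound (h.cq_half x z)).trans (by gcongr; exact h.cq_sq _ _)
    _ = _ := by ring

lemma cq_meas (h : Nice f f' S) : Measurable (fun p : ℝ × ℝ => cq f p.1 p.2) := by
  have := h.cont.measurable
  unfold cq; fun_prop

lemma cq_meas1 (h : Nice f f' S) (x : ℝ) : Measurable (fun z : ℝ => cq f x z) :=
  h.cq_meas.comp (measurable_const.prodMk measurable_id)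

lemma cq_meas2 (h : Nice f f' S) (z : ℝ) : Measurable (fun x : ℝ => cq f x z) :=
  h.cq_meas.comp (measurable_id.prodMk measurable_const)

lemma zmm_int (h : Nice f f' S) (x : ℝ) : Integrable (fun z => z * mm (cq f x z)) := by
  refine (integrable_inv_one_add_sq.const_mul (40 * S ^ 3)).mono' ?_
    (Eventually.of_forall fun z => h.zmm_bound x z)
  have := h.cq_meas1 x
  exact Measurable.aestronglyMeasurable (by fun_prop)

lemma cq_deriv_z (h : Nice f f' S) (x : ℝ) {z : ℝ} (hz : z ≠ 0) :
    HasDerivAt (fun z => cq f x z) ((f' (x - z) - cq f x z) / z) z := by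
  have h1 : HasDerivAt (fun z => x - z) (-1) z := by
    simpa using (hasDerivAt_id z).const_sub x
  have h2 : HasDerivAt (fun z => f x - f (x - z)) (f' (x - z)) z := by
    have := ((h.der (x - z)).comp z h1).const_sub (f x)
    simpa using this
  refine (h2.div (hasDerivAt_id z) hz).congr_deriv ?_
  simp [cq]; field_simp

lemma cq_deriv_x (h : Nice f f' S) (x z : ℝ) :
    HasDerivAt (fun x => cq f x z) ((f' x - f' (x - z)) / z) x := by
  have h1 : HasDerivAt (fun x => x - z) 1 x := (hasDerivAt_id x).sub_const z
  have h2 : HasDerivAt (fun x => f (x - z)) (f' (x - z)) x := by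
    exact ((h.der (x - z)).comp x h1).congr_deriv (mul_one _)
  exact ((h.der x).sub h2).div_const z

lemma psi_deriv (h : Nice f f' S) (x z : ℝ) :
    HasDerivAt (fun z => z ^ 2 * mpsi (cq f x z))
      (z * f' (x - z) * mph (cq f x z) - z * mm (cq f x z)) z := by
  rcases eq_or_ne z 0 with rfl | hz
  · simp only [zero_mul, sub_zero]
    have hO : (fun z : ℝ => z ^ 2 * mpsi (cq f x z)) =O[nhds 0] fun z => z ^ 2 := by
      refine Asymptotics.IsBigO.of_bound 1 (Eventually.of_forall fun z => ?_)
      rw [norm_mul, one_mul]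
      refine mul_le_of_le_one_right (norm_nonneg _) ?_
      have h1 := h.cq_half x z
      have h2 := mpsi_bound h1
      have : |cq f x z| ^ 3 ≤ (1 / 2) ^ 3 := by gcongr
      rw [Real.norm_eq_abs]; linarith
    rw [hasDerivAt_iff_isLittleO]
    have h2 : (fun z : ℝ => z ^ 2) =o[nhds 0] fun z => z := by
      simpa using Asymptotics.isLittleO_pow_id (𝕜 := ℝ) (n := 2) (by norm_num)
    simpa using hO.trans_isLittleO h2
  · have h1 := ((mpsi_deriv (h.cq_half x z)).comp z (h.cq_deriv_z x hz))
    refine (((hasDerivAt_id z).pow 2).mul h1).congr_deriv ?_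
    rw [mph_mm]
    simp
    field_simp
    ring

lemma phi_int (h : Nice f f' S) (x : ℝ) :
    Integrable (fun z => z * f' (x - z) * mph (cq f x z)) := by
  have hi : Integrable (fun z => (4 * S) * |f' (x - z)|) :=
    (h.int'.abs.comp_sub_left x).const_mul _
  refine hi.mono' ?_ (Eventually.of_forall fun z => ?_)
  · have := h.cq_meas1 x
    have := h.cont'.measurable
    exact Measurable.aestronglyMeasurable (by fun_prop)
  · rw [Real.norm_eq_abs, abs_mul, abs_mul]
    have h1 := h.cq_half x z
    have h2 : |z| * |cq f x z| ≤ 2 * S := by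
      rw [← abs_mul, cq_mul]; exact h.diff_le _ _
    calc |z| * |f' (x - z)| * |mph (cq f x z)|
        ≤ |z| * |f' (x - z)| * (4 * |cq f x z| ^ 2) := by gcongr; exact mph_bound h1
      _ = 4 * |f' (x - z)| * ((|z| * |cq f x z|) * |cq f x z|) := by ring
      _ ≤ 4 * |f' (x - z)| * ((2 * S) * (1 / 2)) := by
        have := h.S0
        gcongr
      _ = _ := by ring

lemma psi_tendsto (h : Nice f f' S) (x : ℝ) :
    Tendsto (fun z => z ^ 2 * mpsi (cq f x z)) (Bornology.cobounded ℝ) (nhds 0) := by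
  have ht : Tendsto (fun z : ℝ => 32 * S ^ 3 * ‖z‖⁻¹) (Bornology.cobounded ℝ) (nhds 0) := by
    simpa using (tendsto_inv_atTop_zero.comp (tendsto_norm_cobounded_atTop (E := ℝ))).const_mul (32 * S ^ 3)
  refine squeeze_zero_norm (fun z => ?_) ht
  rcases eq_or_ne z 0 with rfl | hz
  · simp
  have h1 := h.cq_half x z
  have h2 : |z| * |cq f x z| ≤ 2 * S := by
    rw [← abs_mul, cq_mul]; exact h.diff_le _ _
  have hz' := abs_pos.2 hz
  rw [norm_mul, norm_pow, Real.norm_eq_abs, Real.norm_eq_abs, ← div_eq_mul_inv, le_div_iff₀ hz']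
  calc |z| ^ 2 * |mpsi (cq f x z)| * |z| ≤ |z| ^ 2 * (4 * |cq f x z| ^ 3) * |z| := by
        gcongr; exact mpsi_bound h1
    _ = 4 * (|z| * |cq f x z|) ^ 3 := by ring
    _ ≤ 4 * (2 * S) ^ 3 := by gcongr
    _ = _ := by ring

/-- The nonlinear potential. -/
lemma potential_eq (h : Nice f f' S) (x : ℝ) :
    ∫ t, (x - t) * f' t * mph ((f x - f t) / (x - t)) = ∫ z, z * mm (cq f x z) := by
  have h1 : ∫ t, (x - t) * f' t * mph ((f x - f t) / (x - t))
      = ∫ z, z * f' (x - z) * mph (cq f x z) := by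
    rw [← integral_sub_left_eq_self _ volume x]
    simp [cq]
  have h2 := integral_of_hasDerivAt_of_tendsto (h.psi_deriv x)
    ((h.phi_int x).sub (h.zmm_int x))
    ((h.psi_tendsto x).mono_left (by rw [IsOrderBornology.cobounded_eq]; exact le_sup_left))
    ((h.psi_tendsto x).mono_left (by rw [IsOrderBornology.cobounded_eq]; exact le_sup_right))
  rw [integral_sub (h.phi_int x) (h.zmm_int x)] at h2
  linarith

lemma potential_deriv (h : Nice f f' S) (x : ℝ) :
    HasDerivAt (fun x => ∫ z, z * mm (cq f x z))
      (∫ z, mm1 (cq f x z) * (f' x - f' (x - z))) x := by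
  refine (hasDerivAt_integral_of_dominated_loc_of_deriv_le (μ := volume)
    (F := fun x z => z * mm (cq f x z))
    (F' := fun x z => mm1 (cq f x z) * (f' x - f' (x - z)))
    (bound := fun z => 20 * S ^ 2 * (1 + z ^ 2)⁻¹) (s := Set.univ) univ_mem
    (Eventually.of_forall fun x => (h.zmm_int x).1) (h.zmm_int x) ?_
    (Eventually.of_forall fun z x _ => h.mm1_bd x z)
    (integrable_inv_one_add_sq.const_mul _)
    (Eventually.of_forall fun z x _ => ?_)).2
  · have := h.cq_meas1 x
    have := h.cont'.measurable
    exact Measurable.aestronglyMeasurable (by fun_prop)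
  · refine (((mm_deriv (h.cq_half x z)).comp x (h.cq_deriv_x x z)).const_mul z).congr_deriv ?_
    rcases eq_or_ne z 0 with rfl | hz
    · simp [cq, mm1]
    · field_simp

lemma potential_deriv_bound (h : Nice f f' S) (x : ℝ) :
    |∫ z, mm1 (cq f x z) * (f' x - f' (x - z))| ≤ 20 * S ^ 2 * Real.pi := by
  have := norm_integral_le_of_norm_le (f := fun z => mm1 (cq f x z) * (f' x - f' (x - z)))
    (integrable_inv_one_add_sq.const_mul (20 * S ^ 2))
    (Eventually.of_forall fun z => h.mm1_bd x z)
  rwa [integral_const_mul, integral_univ_inv_one_add_sq] at this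

lemma potential_bound (h : Nice f f' S) (x : ℝ) :
    |∫ z, z * mm (cq f x z)| ≤ 40 * S ^ 3 * Real.pi := by
  have := norm_integral_le_of_norm_le (f := fun z => z * mm (cq f x z))
    (integrable_inv_one_add_sq.const_mul (40 * S ^ 3))
    (Eventually.of_forall fun z => h.zmm_bound x z)
  rwa [integral_const_mul, integral_univ_inv_one_add_sq] at this

end Nice

structure Cut (w w' : ℝ → ℝ) : Prop where
  der : ∀ x, HasDerivAt w (w' x) x
  cont' : Continuous w'
  nn : ∀ x, 0 ≤ w x
  le1 : ∀ x, w x ≤ 1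
  b' : ∀ x, |w' x| ≤ 1

namespace Cut

variable {w w' : ℝ → ℝ}

lemma cont (h : Cut w w') : Continuous w :=
  continuous_iff_continuousAt.2 fun x => (h.der x).continuousAt

lemma abs_le1 (h : Cut w w') (x : ℝ) : |w x| ≤ 1 := by
  rw [abs_of_nonneg (h.nn x)]; exact h.le1 x

lemma diff1 (h : Cut w w') (x y : ℝ) : |w x - w y| ≤ 1 := by
  rw [abs_le]; constructor <;> linarith [h.nn x, h.nn y, h.le1 x, h.le1 y]

lemma lip (h : Cut w w') (a b : ℝ) : |w a - w b| ≤ |a - b| := by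
  have := convex_univ.norm_image_sub_le_of_norm_hasDerivWithin_le
    (f := w) (f' := w') (C := 1) (x := b) (y := a)
    (fun x _ => (h.der x).hasDerivWithinAt) (fun x _ => h.b' x) (Set.mem_univ _) (Set.mem_univ _)
  simpa using this

end Cut

namespace Nice

variable {f f' : ℝ → ℝ} {S : ℝ} {w w' : ℝ → ℝ}

lemma bdd_mul_int {u v : ℝ → ℝ} {C : ℝ} (hu : Integrable u) (hv : Measurable v)
    (hb : ∀ x, |v x| ≤ C) : Integrable (fun x => v x * u x) :=
  hu.bdd_mul (c := C) hv.aestronglyMeasurable (Eventually.of_forall hb)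

lemma sq_int (h : Nice f f' S) : Integrable (fun x => f x ^ 2) := by
  have := bdd_mul_int h.int h.cont.measurable h.bS
  simpa [sq] using this

/-- derivative of `w f` -/
def bb (w w' f f' : ℝ → ℝ) (x : ℝ) : ℝ := w' x * f x + w x * f' x

lemma bb_int (h : Nice f f' S) (hw : Cut w w') : Integrable (bb w w' f f') :=
  (bdd_mul_int h.int hw.cont'.measurable hw.b').add
    (bdd_mul_int h.int' hw.cont.measurable hw.abs_le1)

lemma bb_cont (h : Nice f f' S) (hw : Cut w w') : Continuous (bb w w' f f') := by
  have := h.cont; have := h.cont'; have := hw.cont; have := hw.cont'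
  unfold bb; fun_prop

noncomputable def pot (f : ℝ → ℝ) (x : ℝ) : ℝ := ∫ z, z * mm (cq f x z)
noncomputable def pot' (f f' : ℝ → ℝ) (x : ℝ) : ℝ :=
  ∫ z, mm1 (cq f x z) * (f' x - f' (x - z))

lemma pot_deriv (h : Nice f f' S) (x : ℝ) : HasDerivAt (pot f) (pot' f f' x) x :=
  h.potential_deriv x

lemma pot'_meas (h : Nice f f' S) : Measurable (pot' f f') := by
  have : pot' f f' = deriv (pot f) := funext fun x => (h.pot_deriv x).deriv.symm
  rw [this]; exact measurable_deriv _

lemma pot_cont (h : Nice f f' S) : Continuous (pot f) :=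
  continuous_iff_continuousAt.2 fun x => (h.pot_deriv x).continuousAt

lemma energy_parts (h : Nice f f' S) (hw : Cut w w') :
    ∫ x, w x * f x * pot' f f' x = - ∫ x, bb w w' f f' x * pot f x := by
  have hwf : Integrable (fun x => w x * f x) := bdd_mul_int h.int hw.cont.measurable hw.abs_le1
  refine integral_mul_deriv_eq_deriv_mul_of_integrable
    (u := fun x => w x * f x) (u' := bb w w' f f') (v := pot f) (v' := pot' f f')
    (fun x _ => (hw.der x).mul (h.der x)) (fun x _ => h.pot_deriv x) ?_ ?_ ?_
  · have := bdd_mul_int hwf h.pot'_meas h.potential_deriv_bound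
    exact this.congr (Eventually.of_forall fun x => mul_comm _ _)
  · have := bdd_mul_int (h.bb_int hw) h.pot_cont.measurable h.potential_bound
    exact this.congr (Eventually.of_forall fun x => mul_comm _ _)
  · have := bdd_mul_int hwf h.pot_cont.measurable h.potential_bound
    exact this.congr (Eventually.of_forall fun x => mul_comm _ _)

lemma fub_int (h : Nice f f' S) (hw : Cut w w') :
    Integrable (Function.uncurry fun x z => bb w w' f f' x * (z * mm (cq f x z)))
      (volume.prod volume) := by
  have h1 : Integrable (fun p : ℝ × ℝ => |bb w w' f f' p.1| * (40 * S ^ 3 * (1 + p.2 ^ 2)⁻¹))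
      (volume.prod volume) :=
    (h.bb_int hw).abs.mul_prod (integrable_inv_one_add_sq.const_mul _)
  refine h1.mono' ?_ (Eventually.of_forall fun p => ?_)
  · have := (h.bb_cont hw).measurable
    have := h.cq_meas
    have h3 : Measurable fun p : ℝ × ℝ => bb w w' f f' p.1 * (p.2 * mm (cq f p.1 p.2)) := by
      fun_prop
    exact h3.aestronglyMeasurable
  · simp only [Function.uncurry, norm_mul (bb w w' f f' p.1), Real.norm_eq_abs]
    gcongr
    exact h.zmm_bound _ _

noncomputable def ss (w w' f f' : ℝ → ℝ) (z : ℝ) : ℝ :=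
  ∫ x, bb w w' f f' x * (z * mm (cq f x z))

noncomputable def GG (w w' f f' : ℝ → ℝ) (x z : ℝ) : ℝ :=
  (w' x * f x - w' (x - z) * f (x - z) + 1 / 2 * (w x - w (x - z)) * (f' x + f' (x - z))) *
    (z * mm (cq f x z)) - 1 / 2 * ((w' x + w' (x - z)) * (z ^ 2 * mM (cq f x z)))

lemma energy_fub (h : Nice f f' S) (hw : Cut w w') :
    ∫ x, bb w w' f f' x * pot f x = ∫ z, ss w w' f f' z := by
  simp only [pot, ss, ← integral_const_mul]
  exact integral_integral_swap (h.fub_int hw)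

lemma ss_int (h : Nice f f' S) (hw : Cut w w') : Integrable (ss w w' f f') :=
  (h.fub_int hw).integral_prod_right

lemma ss_neg (z : ℝ) : ss w w' f f' (-z)
    = - ∫ x, bb w w' f f' (x - z) * (z * mm (cq f x z)) := by
  rw [ss, ← integral_sub_right_eq_self _ z, ← integral_neg]
  congr 1; ext x
  have : cq f (x - z) (-z) = cq f x z := by
    simp only [cq, sub_neg_eq_add, sub_add_cancel]
    rw [div_neg, ← neg_div, neg_sub]
  rw [this]; ring

lemma zz_meas (h : Nice f f' S) (z : ℝ) : Measurable fun x => z * mm (cq f x z) := by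
  have := h.cq_meas2 z
  fun_prop

lemma zz_bd (h : Nice f f' S) (z x : ℝ) : |z * mm (cq f x z)| ≤ 40 * S ^ 3 := by
  refine (h.zmm_bound x z).trans ?_
  have : (1 + z ^ 2)⁻¹ ≤ 1 := inv_le_one_of_one_le₀ (by nlinarith [sq_nonneg z])
  have := h.S0
  exact mul_le_of_le_one_right (by positivity) ‹_›

lemma zM_bd (h : Nice f f' S) (x z : ℝ) :
    |z ^ 2 * mM (cq f x z)| ≤ 4 * |f x - f (x - z)| ^ 2 * |cq f x z| ^ 2 := by
  rw [abs_mul, ← cq_mul, abs_mul, abs_pow]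
  have := mM_bound (h.cq_half x z)
  calc |z| ^ 2 * |mM (cq f x z)| ≤ |z| ^ 2 * (4 * |cq f x z| ^ 4) := by gcongr
    _ = _ := by ring

lemma zM_int (h : Nice f f' S) (z : ℝ) : Integrable (fun x => z ^ 2 * mM (cq f x z)) := by
  have hD : Integrable (fun x => 2 * S * |f x - f (x - z)|) :=
    ((h.int.sub (h.int.comp_sub_right z)).abs).const_mul _
  refine hD.mono' ?_ (Eventually.of_forall fun x => ?_)
  · have := h.cq_meas2 z
    exact Measurable.aestronglyMeasurable (by fun_prop)
  · refine (h.zM_bd x z).trans ?_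
    have h1 : |cq f x z| ^ 2 ≤ (1 / 2) ^ 2 := by gcongr; exact h.cq_half x z
    have h2 := h.diff_le x (x - z)
    have h0 := abs_nonneg (f x - f (x - z))
    calc 4 * |f x - f (x - z)| ^ 2 * |cq f x z| ^ 2
        ≤ 4 * |f x - f (x - z)| ^ 2 * (1 / 2) ^ 2 := by gcongr
      _ = |f x - f (x - z)| * |f x - f (x - z)| := by ring
      _ ≤ _ := by gcongr

lemma parts2 (h : Nice f f' S) (hw : Cut w w') (z : ℝ) :
    ∫ x, (w x + w (x - z)) * ((f' x - f' (x - z)) * (z * mm (cq f x z)))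
      = - ∫ x, (w' x + w' (x - z)) * (z ^ 2 * mM (cq f x z)) := by
  have hsh : ∀ x, HasDerivAt (fun x => x - z) 1 x := fun x => (hasDerivAt_id x).sub_const z
  have hM := h.zM_int z
  have c1 := hw.cont; have c2 := hw.cont'; have c3 := h.cont'
  refine integral_mul_deriv_eq_deriv_mul_of_integrable
    (u := fun x => w x + w (x - z)) (u' := fun x => w' x + w' (x - z))
    (v := fun x => z ^ 2 * mM (cq f x z))
    (v' := fun x => (f' x - f' (x - z)) * (z * mm (cq f x z)))
    (fun x _ => ?_) (fun x _ => ?_) ?_ ?_ ?_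
  · exact (hw.der x).add (((hw.der (x - z)).comp x (hsh x)).congr_deriv (mul_one _))
  · refine (((mM_deriv (h.cq_half x z)).comp x (h.cq_deriv_x x z)).const_mul (z ^ 2)).congr_deriv ?_
    rcases eq_or_ne z 0 with rfl | hz
    · simp
    · field_simp
  · have hd : Integrable (fun x => f' x - f' (x - z)) := h.int'.sub (h.int'.comp_sub_right z)
    have h1 := bdd_mul_int hd (h.zz_meas z) (h.zz_bd z)
    have h2 := bdd_mul_int (v := fun x => w x + w (x - z)) (C := 2) h1 (by fun_prop) (fun x => by
      have := abs_add_le (w x) (w (x - z)); linarith [hw.abs_le1 x, hw.abs_le1 (x - z)])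
    refine h2.congr (Eventually.of_forall fun x => ?_)
    simp only [Pi.mul_apply]; ring
  · exact bdd_mul_int (v := fun x => w' x + w' (x - z)) (C := 2) hM (by fun_prop) (fun x => by
      have := abs_add_le (w' x) (w' (x - z)); linarith [hw.b' x, hw.b' (x - z)])
  · exact bdd_mul_int (v := fun x => w x + w (x - z)) (C := 2) hM (by fun_prop) (fun x => by
      have := abs_add_le (w x) (w (x - z)); linarith [hw.abs_le1 x, hw.abs_le1 (x - z)])

lemma ss_sym (h : Nice f f' S) (hw : Cut w w') (z : ℝ) :
    ss w w' f f' z + ss w w' f f' (-z) = ∫ x, GG w w' f f' x z := by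
  have c1 := hw.cont; have c2 := hw.cont'; have c3 := h.cont'; have c4 := h.cont
  have i0 := h.bb_int hw
  have i0' : Integrable (fun x => bb w w' f f' (x - z)) := i0.comp_sub_right z
  have i1 : Integrable (fun x => bb w w' f f' x * (z * mm (cq f x z))) :=
    (bdd_mul_int i0 (h.zz_meas z) (h.zz_bd z)).congr (Eventually.of_forall fun x => mul_comm _ _)
  have i2 : Integrable (fun x => bb w w' f f' (x - z) * (z * mm (cq f x z))) :=
    (bdd_mul_int i0' (h.zz_meas z) (h.zz_bd z)).congr (Eventually.of_forall fun x => mul_comm _ _)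
  have hM := h.zM_int z
  have i3 : Integrable (fun x => (w' x + w' (x - z)) * (z ^ 2 * mM (cq f x z))) :=
    bdd_mul_int (v := fun x => w' x + w' (x - z)) (C := 2) hM (by fun_prop) (fun x => by
      have := abs_add_le (w' x) (w' (x - z)); linarith [hw.b' x, hw.b' (x - z)])
  have hd : Integrable (fun x => f' x - f' (x - z)) := h.int'.sub (h.int'.comp_sub_right z)
  have i4 : Integrable
      (fun x => (w x + w (x - z)) * ((f' x - f' (x - z)) * (z * mm (cq f x z)))) := by
    have h1 := bdd_mul_int hd (h.zz_meas z) (h.zz_bd z)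
    have h2 := bdd_mul_int (v := fun x => w x + w (x - z)) (C := 2) h1 (by fun_prop) (fun x => by
      have := abs_add_le (w x) (w (x - z)); linarith [hw.abs_le1 x, hw.abs_le1 (x - z)])
    refine h2.congr (Eventually.of_forall fun x => ?_)
    simp only; ring
  have e1 : (fun x => GG w w' f f' x z) = fun x =>
      ((bb w w' f f' x * (z * mm (cq f x z)) - bb w w' f f' (x - z) * (z * mm (cq f x z)))
      - 1 / 2 * ((w x + w (x - z)) * ((f' x - f' (x - z)) * (z * mm (cq f x z)))))
      - 1 / 2 * ((w' x + w' (x - z)) * (z ^ 2 * mM (cq f x z))) := by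
    ext x; simp only [GG, bb]; ring
  have i12 : Integrable (fun x => bb w w' f f' x * (z * mm (cq f x z))
      - bb w w' f f' (x - z) * (z * mm (cq f x z))) := i1.sub i2
  have i124 : Integrable (fun x => (bb w w' f f' x * (z * mm (cq f x z))
      - bb w w' f f' (x - z) * (z * mm (cq f x z)))
      - 1 / 2 * ((w x + w (x - z)) * ((f' x - f' (x - z)) * (z * mm (cq f x z))))) :=
    i12.sub (i4.const_mul _)
  rw [e1, integral_sub i124 (i3.const_mul _),
    integral_sub i12 (i4.const_mul _), integral_sub i1 i2, integral_const_mul,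
    integral_const_mul, h.parts2 hw z, ss_neg, ss]
  ring

lemma energy_nl (h : Nice f f' S) (hw : Cut w w') :
    ∫ x, w x * f x * pot' f f' x = -(1 / 2) * ∫ z, ∫ x, GG w w' f f' x z := by
  rw [h.energy_parts hw, h.energy_fub hw]
  have h1 : ∫ z, ss w w' f f' (-z) = ∫ z, ss w w' f f' z := integral_neg_eq_self _ _
  have h2 : ∫ z, (ss w w' f f' z + ss w w' f f' (-z)) = ∫ z, ∫ x, GG w w' f f' x z := by
    congr 1; ext z; exact h.ss_sym hw z
  rw [integral_add (h.ss_int hw) (h.ss_int hw).comp_neg, h1] at h2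
  linarith

lemma GG_bound (h : Nice f f' S) (hw : Cut w w') (x z : ℝ) :
    |GG w w' f f' x z| ≤ 100 * S ^ 2 * (1 + z ^ 2)⁻¹ * (f x ^ 2 + f (x - z) ^ 2) := by
  have hS := h.S1
  have hS0 := h.S0
  set c := |cq f x z| with hc
  set D := |f x - f (x - z)| with hD
  set k := (1 + z ^ 2)⁻¹ with hk
  have hkp : 0 < k := by positivity
  have hck : k * (1 + z ^ 2) = 1 := inv_mul_cancel₀ (by positivity)
  have h1 : c ^ 2 ≤ 5 * S ^ 2 * k := h.cq_sq x z
  have hc0 : 0 ≤ c := abs_nonneg _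
  have hD0 : 0 ≤ D := abs_nonneg _
  have hc2 : c ≤ 1 / 2 := h.cq_half x z
  have hzc : |z| * c = D := by rw [hc, ← abs_mul, cq_mul]
  have hDS : D ≤ 2 * S := h.diff_le _ _
  have hDa : D ≤ |f x| + |f (x - z)| := abs_sub _ _
  set q := f x ^ 2 + f (x - z) ^ 2 with hq
  have hab : (|f x| + |f (x - z)|) ^ 2 ≤ 2 * q := by
    have := sq_nonneg (|f x| - |f (x - z)|)
    rw [hq, ← sq_abs (f x), ← sq_abs (f (x - z))]; nlinarith
  have hD2 : D ^ 2 ≤ 2 * q := (by gcongr : D ^ 2 ≤ (|f x| + |f (x - z)|) ^ 2).trans hab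
  have hq0 : 0 ≤ q := by positivity
  have hmm : |z * mm (cq f x z)| ≤ 4 * D * c ^ 2 := h.zmm_bound' x z
  have hMM : |z ^ 2 * mM (cq f x z)| ≤ 4 * D ^ 2 * c ^ 2 := h.zM_bd x z
  -- first term
  have t1 : |(w' x * f x - w' (x - z) * f (x - z)) * (z * mm (cq f x z))| ≤ 40 * S ^ 2 * k * q := by
    rw [abs_mul]
    have : |w' x * f x - w' (x - z) * f (x - z)| ≤ |f x| + |f (x - z)| := by
      refine (abs_sub _ _).trans ?_
      rw [abs_mul, abs_mul]
      exact add_le_add (mul_le_of_le_one_left (abs_nonneg _) (hw.b' _))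
        (mul_le_of_le_one_left (abs_nonneg _) (hw.b' _))
    calc _ ≤ (|f x| + |f (x - z)|) * (4 * (|f x| + |f (x - z)|) * (5 * S ^ 2 * k)) := by
          gcongr; exact hmm.trans (by gcongr)
      _ = 20 * S ^ 2 * k * (|f x| + |f (x - z)|) ^ 2 := by ring
      _ ≤ 20 * S ^ 2 * k * (2 * q) := by gcongr
      _ = _ := by ring
  have t2 : |1 / 2 * (w x - w (x - z)) * (f' x + f' (x - z)) * (z * mm (cq f x z))|
      ≤ 12 * S ^ 2 * k * q := by
    rw [abs_mul, abs_mul, abs_mul, abs_of_pos (by norm_num : (0 : ℝ) < 1 / 2)]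
    have hf1 : |f' x + f' (x - z)| ≤ 1 := by
      have := abs_add_le (f' x) (f' (x - z)); linarith [h.b' x, h.b' (x - z)]
    set d := |w x - w (x - z)| with hd
    have hd0 : 0 ≤ d := abs_nonneg _
    have hd1 : d ≤ 1 := hw.diff1 _ _
    have hdz : d ≤ |z| := by simpa using hw.lip x (x - z)
    have key : d * D * c ^ 2 * (1 + z ^ 2) ≤ 3 * S * D ^ 2 := by
      have e : d * D * c ^ 2 * (1 + z ^ 2) = d * D * c ^ 2 + d * D * D ^ 2 := by
        rw [← hzc, ← sq_abs z]; ring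
      have a1 : d * D * c ^ 2 ≤ 1 / 2 * D ^ 2 := by
        calc d * D * c ^ 2 ≤ |z| * D * c ^ 2 := by gcongr
          _ = (|z| * c) * D * c := by ring
          _ = D ^ 2 * c := by rw [hzc]; ring
          _ ≤ D ^ 2 * (1 / 2) := by gcongr
          _ = _ := by ring
      have a2 : d * D * D ^ 2 ≤ 1 * (2 * S) * D ^ 2 := by gcongr
      nlinarith [sq_nonneg D]
    have key2 : d * D * c ^ 2 ≤ 3 * S * D ^ 2 * k := by
      calc d * D * c ^ 2 = (d * D * c ^ 2 * (1 + z ^ 2)) * k := by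
            linear_combination (-(d * D * c ^ 2)) * hck
        _ ≤ _ := by gcongr
    calc 1 / 2 * d * |f' x + f' (x - z)| * |z * mm (cq f x z)|
        ≤ 1 / 2 * d * 1 * (4 * D * c ^ 2) := by gcongr
      _ = 2 * (d * D * c ^ 2) := by ring
      _ ≤ 2 * (3 * S * D ^ 2 * k) := by gcongr
      _ ≤ 2 * (3 * (S * S) * (2 * q) * k) := by gcongr; nlinarith
      _ = _ := by ring
  have t3 : |1 / 2 * ((w' x + w' (x - z)) * (z ^ 2 * mM (cq f x z)))| ≤ 40 * S ^ 2 * k * q := by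
    rw [abs_mul, abs_mul, abs_of_pos (by norm_num : (0 : ℝ) < 1 / 2)]
    have hf1 : |w' x + w' (x - z)| ≤ 2 := by
      have := abs_add_le (w' x) (w' (x - z)); linarith [hw.b' x, hw.b' (x - z)]
    calc _ ≤ 1 / 2 * (2 * (4 * (2 * q) * (5 * S ^ 2 * k))) := by
          gcongr; exact hMM.trans (by gcongr)
      _ = _ := by ring
  have e : GG w w' f f' x z = (w' x * f x - w' (x - z) * f (x - z)) * (z * mm (cq f x z))
      + 1 / 2 * (w x - w (x - z)) * (f' x + f' (x - z)) * (z * mm (cq f x z))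
      - 1 / 2 * ((w' x + w' (x - z)) * (z ^ 2 * mM (cq f x z))) := by
    simp only [GG]; ring
  rw [e]
  refine (abs_sub _ _).trans ?_
  have := abs_add_le ((w' x * f x - w' (x - z) * f (x - z)) * (z * mm (cq f x z)))
    (1 / 2 * (w x - w (x - z)) * (f' x + f' (x - z)) * (z * mm (cq f x z)))
  have : 0 ≤ S ^ 2 * k * q := by positivity
  linarith

lemma energy_nl_bound (h : Nice f f' S) (hw : Cut w w') :
    |∫ x, w x * f x * pot' f f' x| ≤ 100 * S ^ 2 * Real.pi * ∫ x, f x ^ 2 := by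
  rw [h.energy_nl hw, abs_mul]
  have hz : ∀ z, ‖∫ x, GG w w' f f' x z‖ ≤ 200 * S ^ 2 * (∫ x, f x ^ 2) * (1 + z ^ 2)⁻¹ := by
    intro z
    have i2 : Integrable (fun x => f (x - z) ^ 2) := h.sq_int.comp_sub_right z
    have := norm_integral_le_of_norm_le (f := fun x => GG w w' f f' x z)
      ((h.sq_int.add i2).const_mul (100 * S ^ 2 * (1 + z ^ 2)⁻¹))
      (Eventually.of_forall fun x => h.GG_bound hw x z)
    refine this.trans (le_of_eq ?_)
    simp only [Pi.add_apply]
    rw [integral_const_mul, integral_add h.sq_int i2,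
      integral_sub_right_eq_self (fun x => f x ^ 2)]
    ring
  have := norm_integral_le_of_norm_le (f := fun z => ∫ x, GG w w' f f' x z)
    (integrable_inv_one_add_sq.const_mul _) (Eventually.of_forall hz)
  rw [integral_const_mul, integral_univ_inv_one_add_sq, Real.norm_eq_abs] at this
  rw [abs_neg, abs_of_pos (by norm_num : (0 : ℝ) < 1 / 2)]
  linarith

lemma energy_nl_one (h : Nice f f' S) : ∫ x, f x * pot' f f' x = 0 := by
  have hw : Cut (fun _ => 1) (fun _ => 0) :=
    ⟨fun x => hasDerivAt_const x 1, continuous_const, by simp, by simp, by simp⟩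
  have := h.energy_nl hw
  simpa [GG] using this

end Nice

noncomputable def hk (f : ℝ → ℝ) (x z : ℝ) : ℝ := (f (x - z) - f (x + z)) / z
noncomputable def hh (f : ℝ → ℝ) (x : ℝ) : ℝ := 1 / (2 * Real.pi) * ∫ z, hk f x z

namespace Nice

variable {f f' : ℝ → ℝ} {S : ℝ} {w w' : ℝ → ℝ}

lemma hk_one (h : Nice f f' S) (x z : ℝ) : |hk f x z| ≤ 1 := by
  unfold hk
  rw [abs_div]
  refine div_le_one_of_le₀ ?_ (abs_nonneg _)
  have := h.lip (x - z) (x + z)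
  rw [show x - z - (x + z) = -(2 * z) by ring, abs_neg, abs_mul, abs_two] at this
  linarith

lemma hk_meas (h : Nice f f' S) : Measurable (fun p : ℝ × ℝ => hk f p.1 p.2) := by
  have := h.cont.measurable
  unfold hk; fun_prop

lemma hk_meas1 (h : Nice f f' S) (x : ℝ) : Measurable (fun z => hk f x z) := by
  have := h.cont.measurable
  unfold hk; fun_prop

/-- the squares -/
def qq (f : ℝ → ℝ) (x z : ℝ) : ℝ := f (x - z) ^ 2 + f (x + z) ^ 2

lemma qq_int (h : Nice f f' S) (x : ℝ) : Integrable (fun z => qq f x z) := by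
  have h1 : Integrable (fun z => f (x - z) ^ 2) := h.sq_int.comp_sub_left x
  have h2 : Integrable (fun z => f (x + z) ^ 2) := h.sq_int.comp_add_left x
  exact h1.add h2

lemma qq_integral (h : Nice f f' S) (x : ℝ) : ∫ z, qq f x z = 2 * ∫ y, f y ^ 2 := by
  have h1 : Integrable (fun z => f (x - z) ^ 2) := h.sq_int.comp_sub_left x
  have h2 : Integrable (fun z => f (x + z) ^ 2) := h.sq_int.comp_add_left x
  unfold qq
  rw [integral_add h1 h2, integral_sub_left_eq_self (fun y => f y ^ 2),
    integral_add_left_eq_self (fun y => f y ^ 2)]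
  ring

lemma qq_nn (x z : ℝ) : 0 ≤ qq f x z := by unfold qq; positivity

/-- Young type bound -/
lemma hk_young {r : ℝ} (hr : 0 < r) (x z : ℝ) :
    |hk f x z| ≤ 1 / (2 * r) * qq f x z + r * (z ^ 2)⁻¹ := by
  unfold hk qq
  rcases eq_or_ne z 0 with rfl | hz
  · simp only [div_zero, abs_zero]; positivity
  set a := f (x - z); set b := f (x + z)
  have hz' : 0 < |z| := abs_pos.2 hz
  rw [abs_div, ← sq_abs z]
  have h1 : |a - b| ≤ |a| + |b| := abs_sub _ _
  rw [← sq_abs a, ← sq_abs b]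
  have e : 1 / (2 * r) * (|a| ^ 2 + |b| ^ 2) + r * (|z| ^ 2)⁻¹ - (|a| + |b|) / |z|
     = 1 / (2 * r) * ((|a| - r / |z|) ^ 2 + (|b| - r / |z|) ^ 2) := by
    field_simp; ring
  have e2 : 0 ≤ 1 / (2 * r) * ((|a| - r / |z|) ^ 2 + (|b| - r / |z|) ^ 2) := by positivity
  have : |a - b| / |z| ≤ (|a| + |b|) / |z| := by gcongr
  linarith

lemma hk_bound (h : Nice f f' S) (x z : ℝ) :
    |hk f x z| ≤ 2 * (1 + z ^ 2)⁻¹ + 1 / 2 * qq f x z := by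
  have hq := qq_nn (f := f) x z
  rcases le_or_gt (z ^ 2) 1 with hz | hz
  · have : (1 : ℝ) / 2 ≤ (1 + z ^ 2)⁻¹ := by
      rw [one_div]; exact inv_anti₀ (by positivity) (by linarith)
    linarith [h.hk_one x z]
  · have h1 := hk_young (f := f) one_pos x z
    have : (z ^ 2)⁻¹ ≤ 2 * (1 + z ^ 2)⁻¹ := by
      rw [← div_eq_mul_inv, inv_eq_one_div, div_le_div_iff₀ (by positivity) (by positivity)]
      linarith
    norm_num at h1 ⊢
    linarith

lemma hkb_int (h : Nice f f' S) (x : ℝ) :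
    Integrable (fun z => 2 * (1 + z ^ 2)⁻¹ + 1 / 2 * qq f x z) :=
  (integrable_inv_one_add_sq.const_mul 2).add ((h.qq_int x).const_mul _)

lemma hk_int (h : Nice f f' S) (x : ℝ) : Integrable (fun z => hk f x z) :=
  (h.hkb_int x).mono' (h.hk_meas1 x).aestronglyMeasurable
    (Eventually.of_forall fun z => h.hk_bound x z)

lemma hk_abs (h : Nice f f' S) (x : ℝ) :
    ∫ z, |hk f x z| ≤ 2 * Real.pi + ∫ y, f y ^ 2 := by
  refine (integral_mono (h.hk_int x).abs (h.hkb_int x) fun z => h.hk_bound x z).trans (le_of_eq ?_)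
  rw [integral_add (integrable_inv_one_add_sq.const_mul 2) ((h.qq_int x).const_mul _),
    integral_const_mul, integral_const_mul, h.qq_integral, integral_univ_inv_one_add_sq]
  ring

lemma hh_bound (h : Nice f f' S) (x : ℝ) : |hh f x| ≤ 2 * Real.pi + ∫ y, f y ^ 2 := by
  unfold hh
  rw [abs_mul]
  have h1 : |∫ z, hk f x z| ≤ ∫ z, |hk f x z| := abs_integral_le_integral_abs
  have hp := Real.pi_gt_three
  have h2 : |1 / (2 * Real.pi)| ≤ 1 := by
    rw [abs_of_pos (by positivity), div_le_one (by positivity)]; linarith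
  calc _ ≤ 1 * |∫ z, hk f x z| := by gcongr
    _ ≤ _ := by rw [one_mul]; exact h1.trans (h.hk_abs x)

lemma hh_meas (h : Nice f f' S) : Measurable (hh f) := by
  have := (h.hk_meas.stronglyMeasurable.integral_prod_right' (ν := volume)).measurable
  exact this.const_mul _

lemma hil (h : Nice f f' S) {H : ℝ → ℝ} (hH : IsHilbertTransform f H) (x : ℝ) :
    H x = hh f x := by
  refine tendsto_nhds_unique (hH x) ?_
  have hm := h.cont.measurable
  have key : ∀ δ : ℝ, 0 < δ → ∫ y in {y : ℝ | δ < |x - y|}, f y / (x - y)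
      = 1 / 2 * ∫ z, {z : ℝ | δ < |z|}.indicator (fun z => hk f x z) z := by
    intro δ hδ
    have hms : MeasurableSet {z : ℝ | δ < |z|} := measurableSet_lt measurable_const (by fun_prop)
    have hms' : MeasurableSet {y : ℝ | δ < |x - y|} :=
      measurableSet_lt measurable_const (by fun_prop)
    set u : ℝ → ℝ := {z : ℝ | δ < |z|}.indicator (fun z => f (x - z) / z) with hu
    have hum : Measurable u := (by fun_prop : Measurable (fun z => f (x - z) / z)).indicator hms
    have hui : Integrable u := by
      refine ((h.int.comp_sub_left x).norm.const_mul δ⁻¹).mono' hum.aestronglyMeasurable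
        (Eventually.of_forall fun z => ?_)
      by_cases hz : δ < |z|
      · rw [hu, Set.indicator_of_mem (by exact hz), norm_div, div_eq_inv_mul]
        gcongr
        exact hz.le
      · rw [hu, Set.indicator_of_notMem (by exact hz), norm_zero]; positivity
    have e1 : ∫ y in {y : ℝ | δ < |x - y|}, f y / (x - y) = ∫ z, u z := by
      rw [← integral_indicator hms', ← integral_sub_left_eq_self u volume x]
      congr 1; ext y
      simp only [hu, Set.indicator_apply, Set.mem_ofPred_eq, sub_sub_cancel]
    have e2 : ∫ z, (u z + u (-z)) = 2 * ∫ z, u z := by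
      rw [integral_add hui hui.comp_neg, integral_neg_eq_self]; ring
    rw [e1]
    have e3 : (fun z => u z + u (-z)) = {z : ℝ | δ < |z|}.indicator (fun z => hk f x z) := by
      ext z
      simp only [hu, Set.indicator_apply, Set.mem_ofPred_eq, abs_neg, hk]
      split_ifs
      · rw [sub_neg_eq_add, div_neg]; ring
      · simp
    rw [← e3, e2]; ring
  have lim : Tendsto (fun δ : ℝ => ∫ z, {z : ℝ | δ < |z|}.indicator (fun z => hk f x z) z)
      (nhdsWithin 0 (Set.Ioi 0)) (nhds (∫ z, hk f x z)) := by
    refine tendsto_integral_filter_of_dominated_convergence (fun z => |hk f x z|)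
      (Eventually.of_forall fun δ => ?_) (Eventually.of_forall fun δ => ?_) (h.hk_int x).abs ?_
    · exact ((h.hk_meas1 x).indicator
        (measurableSet_lt measurable_const (by fun_prop))).aestronglyMeasurable
    · exact Eventually.of_forall fun z => norm_indicator_le_norm_self _ _
    · have : ∀ᵐ z : ℝ, z ≠ 0 := by
        simp [ae_iff]
      filter_upwards [this] with z hz
      refine tendsto_const_nhds.congr' ?_
      have : ∀ᶠ δ : ℝ in nhdsWithin 0 (Set.Ioi 0), δ < |z| :=
        mem_nhdsWithin_of_mem_nhds (Iio_mem_nhds (abs_pos.2 hz))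
      filter_upwards [this] with δ hδ
      rw [Set.indicator_of_mem (by exact hδ)]
  have := lim.const_mul (1 / (2 * Real.pi))
  refine this.congr' ?_
  filter_upwards [self_mem_nhdsWithin] with δ hδ
  rw [key δ hδ]
  field_simp

/-- correlation -/
noncomputable def JJ (w f : ℝ → ℝ) (z : ℝ) : ℝ := ∫ x, (w x - w (x - z)) * (f x * f (x - z))

lemma wf_int (h : Nice f f' S) (hw : Cut w w') : Integrable (fun x => w x * f x) :=
  bdd_mul_int h.int hw.cont.measurable hw.abs_le1

lemma hk_prod_int (h : Nice f f' S) (hw : Cut w w') (A : Set ℝ) :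
    Integrable (fun p : ℝ × ℝ => w p.1 * f p.1 * hk f p.1 p.2)
      ((volume : Measure ℝ).prod (volume.restrict A)) := by
  have c1 := hw.cont.measurable; have c4 := h.cont.measurable; have c5 := h.hk_meas
  have hm : AEStronglyMeasurable (fun p : ℝ × ℝ => w p.1 * f p.1 * hk f p.1 p.2)
      ((volume : Measure ℝ).prod (volume.restrict A)) :=
    Measurable.aestronglyMeasurable (by fun_prop)
  rw [integrable_prod_iff hm]
  refine ⟨Eventually.of_forall fun x => ((h.hk_int x).restrict).const_mul (w x * f x), ?_⟩
  refine ((h.wf_int hw).norm.mul_const (2 * Real.pi + ∫ y, f y ^ 2)).mono'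
    hm.norm.integral_prod_right' (Eventually.of_forall fun x => ?_)
  simp only [norm_mul _ (hk f _ _)]
  rw [integral_const_mul, norm_mul, norm_norm]
  gcongr
  rw [Real.norm_of_nonneg (by positivity)]
  refine le_trans (setIntegral_le_integral (h.hk_int x).norm ?_) (h.hk_abs x)
  exact Eventually.of_forall fun z => norm_nonneg _

lemma hk_fub (h : Nice f f' S) (hw : Cut w w') (A : Set ℝ) :
    ∫ x, w x * f x * ∫ z in A, hk f x z = ∫ z in A, JJ w f z / z := by
  have c1 := hw.cont.measurable; have c4 := h.cont.measurable
  have := integral_integral_swap (f := fun x z => w x * f x * hk f x z) (h.hk_prod_int hw A)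
  simp only [integral_const_mul] at this
  rw [this]
  congr 1; ext z
  have i1 : Integrable (fun x => w x * f x * f (x - z)) :=
    (bdd_mul_int (h.wf_int hw) (v := fun x => f (x - z)) (by fun_prop) (fun x => h.bS _)).congr
      (Eventually.of_forall fun x => mul_comm _ _)
  have i2 : Integrable (fun x => w x * f x * f (x + z)) :=
    (bdd_mul_int (h.wf_int hw) (v := fun x => f (x + z)) (by fun_prop) (fun x => h.bS _)).congr
      (Eventually.of_forall fun x => mul_comm _ _)
  have i3 : Integrable (fun x => w (x - z) * f (x - z) * f x) := by
    simpa using i2.comp_sub_right z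
  have e2 : ∫ x, w x * f x * f (x + z) = ∫ x, w (x - z) * f (x - z) * f x := by
    rw [← integral_sub_right_eq_self (fun x => w x * f x * f (x + z)) z]
    simp
  have e1 : (fun x => w x * f x * hk f x z)
      = fun x => (w x * f x * f (x - z) - w x * f x * f (x + z)) / z := by
    ext x; unfold hk; ring
  rw [e1, integral_div, integral_sub i1 i2, e2, ← integral_sub i1 i3, JJ]
  congr 2; ext x; ring

lemma energy_h_one (h : Nice f f' S) : ∫ x, f x * hh f x = 0 := by
  have hw : Cut (fun _ => 1) (fun _ => 0) :=
    ⟨fun x => hasDerivAt_const x 1, continuous_const, by simp, by simp, by simp⟩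
  have := h.hk_fub hw Set.univ
  simp [JJ] at this
  unfold hh
  have e : (fun x => f x * (1 / (2 * Real.pi) * ∫ z, hk f x z))
    = fun x => (1 / (2 * Real.pi)) * (f x * ∫ z, hk f x z) := by ext x; ring
  rw [e, integral_const_mul, this, mul_zero]

end Nice

noncomputable def wR (R x : ℝ) : ℝ := (1 + (x / R) ^ 2)⁻¹
noncomputable def wR' (R x : ℝ) : ℝ := -(2 * (x / R) * (1 / R)) / (1 + (x / R) ^ 2) ^ 2

lemma wR_bd' {R : ℝ} (hR : 0 < R) (x : ℝ) : |wR' R x| ≤ 1 / R := by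
  unfold wR'
  set u := x / R
  have h0 : 0 < 1 + u ^ 2 := by positivity
  rw [abs_div, abs_neg, abs_mul, abs_of_pos (by positivity : 0 < 1 / R),
    abs_of_pos (by positivity : 0 < (1 + u ^ 2) ^ 2), div_le_iff₀ (by positivity), mul_comm]
  gcongr
  rw [abs_mul, abs_two, ← sq_abs u]
  nlinarith [abs_nonneg u, sq_nonneg (|u| - 1), sq_nonneg (|u|), sq_nonneg (|u|^2)]

lemma wR_der {R : ℝ} (x : ℝ) : HasDerivAt (wR R) (wR' R x) x := by
  have h0 : 1 + (x / R) ^ 2 ≠ 0 := by positivity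
  have := ((((hasDerivAt_id x).div_const R).pow 2).const_add 1).inv h0
  refine this.congr_deriv ?_
  unfold wR'; simp

lemma wR_cut {R : ℝ} (hR : 1 ≤ R) : Cut (wR R) (wR' R) where
  der := wR_der
  cont' := by
    unfold wR'
    refine Continuous.div (by fun_prop) (by fun_prop) fun x => by positivity
  nn x := by unfold wR; positivity
  le1 x := by
    unfold wR; exact inv_le_one_of_one_le₀ (by linarith [sq_nonneg (x / R)])
  b' x := (wR_bd' (by linarith) x).trans (by rw [div_le_one (by linarith)]; exact hR)

lemma wR_lip {R : ℝ} (hR : 0 < R) (a b : ℝ) : |wR R a - wR R b| ≤ 1 / R * |a - b| := by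
  have := convex_univ.norm_image_sub_le_of_norm_hasDerivWithin_le
    (f := wR R) (f' := wR' R) (C := 1 / R) (x := b) (y := a)
    (fun x _ => (wR_der x).hasDerivWithinAt) (fun x _ => wR_bd' hR x)
    (Set.mem_univ _) (Set.mem_univ _)
  simpa using this

lemma wR_int {R : ℝ} (hR : 0 < R) : Integrable (wR R) :=
  integrable_inv_one_add_sq.comp_div hR.ne'

lemma wR_integral {R : ℝ} (hR : 0 < R) : ∫ x, wR R x = Real.pi * R := by
  have := Measure.integral_comp_div (fun x : ℝ => (1 + x ^ 2)⁻¹) R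
  rw [integral_univ_inv_one_add_sq, abs_of_pos hR, smul_eq_mul] at this
  rw [mul_comm]; exact this

lemma wR_tendsto (x : ℝ) : Tendsto (fun R : ℝ => wR R x) atTop (nhds 1) := by
  have h1 : Tendsto (fun R : ℝ => x / R) atTop (nhds 0) := tendsto_const_nhds.div_atTop tendsto_id
  have h2 := ((h1.pow 2).const_add 1).inv₀ (by norm_num)
  simpa [wR] using h2

namespace Nice

variable {f f' : ℝ → ℝ} {S : ℝ}

lemma JJ_bound (h : Nice f f' S) {R : ℝ} (hR : 0 < R) (z : ℝ) :
    |JJ (wR R) f z / z| ≤ (∫ x, f x ^ 2) / R := by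
  have i2 : Integrable (fun x => f (x - z) ^ 2) := h.sq_int.comp_sub_right z
  have hN : 0 ≤ ∫ x, f x ^ 2 := integral_nonneg fun x => sq_nonneg _
  have h1 : |JJ (wR R) f z| ≤ (∫ x, f x ^ 2) / R * |z| := by
    have := norm_integral_le_of_norm_le
      (f := fun x => (wR R x - wR R (x - z)) * (f x * f (x - z)))
      ((h.sq_int.add i2).const_mul (1 / R * |z| * (1 / 2)))
      (Eventually.of_forall fun x => by
        have a1 := wR_lip hR x (x - z)
        rw [sub_sub_cancel] at a1
        have a2 : |f x * f (x - z)| ≤ 1 / 2 * (f x ^ 2 + f (x - z) ^ 2) := by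
          rw [abs_mul, ← sq_abs (f x), ← sq_abs (f (x - z))]
          nlinarith [sq_nonneg (|f x| - |f (x - z)|)]
        rw [Real.norm_eq_abs, abs_mul]
        simp only [Pi.add_apply]
        rw [mul_assoc (1 / R * |z|)]
        gcongr)
    refine this.trans (le_of_eq ?_)
    simp only [Pi.add_apply]
    rw [integral_const_mul, integral_add h.sq_int i2,
      integral_sub_right_eq_self (fun x => f x ^ 2)]
    ring
  rw [abs_div]
  exact div_le_of_le_mul₀ (abs_nonneg _) (by positivity) h1

lemma far_bound (h : Nice f f' S) {r : ℝ} (hr : 1 ≤ r) (x : ℝ) :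
    |∫ z in (Set.Icc (-r ^ 2) (r ^ 2))ᶜ, hk f x z| ≤ ((∫ y, f y ^ 2) + 2 * Real.pi) / r := by
  have hr0 : 0 < r := by linarith
  have hR : 0 < r ^ 2 := by positivity
  have ib : Integrable (fun z => 1 / (2 * r) * qq f x z + 2 * r / (r ^ 2) ^ 2 * wR (r ^ 2) z) :=
    ((h.qq_int x).const_mul _).add ((wR_int hR).const_mul _)
  have hb : ∀ᵐ z ∂(volume.restrict (Set.Icc (-r ^ 2) (r ^ 2))ᶜ),
      ‖hk f x z‖ ≤ 1 / (2 * r) * qq f x z + 2 * r / (r ^ 2) ^ 2 * wR (r ^ 2) z := by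
    refine (ae_restrict_iff' measurableSet_Icc.compl).2 (Eventually.of_forall fun z hz => ?_)
    refine (hk_young hr0 x z).trans ?_
    have hz' : r ^ 2 < |z| := by
      by_contra hc
      push Not at hc
      exact hz (abs_le.1 hc)
    have hz2 : (r ^ 2) ^ 2 < z ^ 2 := by rw [← sq_abs z]; gcongr
    have : r * (z ^ 2)⁻¹ ≤ 2 * r / (r ^ 2) ^ 2 * wR (r ^ 2) z := by
      unfold wR
      have e : 2 * r / (r ^ 2) ^ 2 * (1 + (z / r ^ 2) ^ 2)⁻¹ = r * (2 / ((r ^ 2) ^ 2 + z ^ 2)) := by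
        field_simp
      rw [e]
      have hz0 : 0 < z ^ 2 := (by positivity : 0 < (r ^ 2) ^ 2).trans hz2
      gcongr
      rw [inv_eq_one_div, div_le_div_iff₀ hz0 (by positivity)]
      linarith
    linarith
  have := norm_integral_le_of_norm_le (f := fun z => hk f x z) ib.restrict hb
  refine this.trans ((setIntegral_le_integral ib (Eventually.of_forall fun z => ?_)).trans
    (le_of_eq ?_))
  · have := qq_nn (f := f) x z
    have : 0 ≤ wR (r ^ 2) z := by unfold wR; positivity
    simp only [Pi.zero_apply]; positivity
  · rw [integral_add ((h.qq_int x).const_mul _) ((wR_int hR).const_mul _), integral_const_mul,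
      integral_const_mul, h.qq_integral, wR_integral hR]
    field_simp

lemma energy_h_bound (h : Nice f f' S) {r : ℝ} (hr : 1 ≤ r) :
    |∫ x, wR (r ^ 2) x * f x * hh f x| ≤ 2 * (∫ x, f x ^ 2) +
      1 / 2 * (((∫ x, f x ^ 2) + 2 * Real.pi) * ((∫ x, f x ^ 2) + Real.pi)) := by
  have hr0 : 0 < r := by linarith
  have hR : 0 < r ^ 2 := by positivity
  have hw : Cut (wR (r ^ 2)) (wR' (r ^ 2)) := wR_cut (by nlinarith)
  set N := ∫ x, f x ^ 2 with hNdef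
  have hN : 0 ≤ N := integral_nonneg fun x => sq_nonneg _
  set A := Set.Icc (-r ^ 2) (r ^ 2) with hA
  set w := wR (r ^ 2) with hwd
  have near : |∫ x, w x * f x * ∫ z in A, hk f x z| ≤ 2 * N := by
    rw [h.hk_fub hw A]
    have := norm_setIntegral_le_of_norm_le_const (μ := volume) (s := A)
      (f := fun z => JJ w f z / z) (C := N / r ^ 2)
      (by rw [hA, Real.volume_Icc]; exact ENNReal.ofReal_lt_top)
      (fun z _ => h.JJ_bound hR z)
    refine this.trans (le_of_eq ?_)
    rw [measureReal_def, hA, Real.volume_Icc, ENNReal.toReal_ofReal (by linarith)]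
    field_simp; ring
  have far : |∫ x, w x * f x * ∫ z in Aᶜ, hk f x z|
      ≤ 1 / 2 * ((N + 2 * Real.pi) * (N + Real.pi)) := by
    have ib : Integrable (fun x => (1 / 2 * r * f x ^ 2 + 1 / 2 * r⁻¹ * w x)
        * ((N + 2 * Real.pi) / r)) :=
      ((h.sq_int.const_mul _).add ((wR_int hR).const_mul _)).mul_const _
    have := norm_integral_le_of_norm_le (f := fun x => w x * f x * ∫ z in Aᶜ, hk f x z) ib
      (Eventually.of_forall fun x => by
        rw [norm_mul]
        have a0 := hw.nn x
        have a1 := hw.le1 x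
        refine mul_le_mul ?_ (h.far_bound hr x) (norm_nonneg _) (by positivity)
        rw [Real.norm_eq_abs, abs_mul, abs_of_nonneg a0]
        have e : 1 / 2 * r * f x ^ 2 + 1 / 2 * r⁻¹ * w x - w x * |f x| =
            1 / 2 * r * (|f x| - r⁻¹ * w x) ^ 2 + 1 / 2 * r⁻¹ * (w x * (1 - w x)) := by
          rw [← sq_abs (f x)]; field_simp; ring
        have : 0 ≤ 1 / 2 * r * (|f x| - r⁻¹ * w x) ^ 2 + 1 / 2 * r⁻¹ * (w x * (1 - w x)) := by
          have : 0 ≤ 1 - w x := by linarith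
          positivity
        linarith)
    refine this.trans (le_of_eq ?_)
    rw [integral_mul_const, integral_add (h.sq_int.const_mul _) ((wR_int hR).const_mul _),
      integral_const_mul, integral_const_mul, wR_integral hR, ← hNdef]
    field_simp
  have ia : Integrable (fun x => w x * f x * ∫ z in A, hk f x z) := by
    have := (h.hk_prod_int hw A).integral_prod_left
    simpa only [integral_const_mul] using this
  have ic : Integrable (fun x => w x * f x * ∫ z in Aᶜ, hk f x z) := by
    have := (h.hk_prod_int hw Aᶜ).integral_prod_left
    simpa only [integral_const_mul] using this
  have e : (fun x => w x * f x * hh f x) = fun x => 1 / (2 * Real.pi) *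
      (w x * f x * (∫ z in A, hk f x z) + w x * f x * ∫ z in Aᶜ, hk f x z) := by
    ext x
    rw [← mul_add, integral_add_compl measurableSet_Icc (h.hk_int x), hh]; ring
  rw [e, integral_const_mul, integral_add ia ic, abs_mul]
  have hp := Real.pi_gt_three
  have h2 : |1 / (2 * Real.pi)| ≤ 1 := by
    rw [abs_of_pos (by positivity), div_le_one (by positivity)]; linarith
  refine (mul_le_of_le_one_left (abs_nonneg _) h2).trans ((abs_add_le _ _).trans ?_)
  exact add_le_add near far

end Nice

/-- the right hand side -/
noncomputable def AA (f f' : ℝ → ℝ) (x : ℝ) : ℝ := hh f x + 1 / Real.pi * Nice.pot' f f' x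

namespace Nice

variable {f f' : ℝ → ℝ} {S : ℝ}

lemma AA_meas (h : Nice f f' S) : Measurable (AA f f') :=
  h.hh_meas.add (h.pot'_meas.const_mul _)

lemma AA_bound (h : Nice f f' S) (x : ℝ) :
    |AA f f' x| ≤ 2 * Real.pi + (∫ y, f y ^ 2) + 20 * S ^ 2 := by
  have h1 := h.hh_bound x
  have h2 : |pot' f f' x| ≤ 20 * S ^ 2 * Real.pi := h.potential_deriv_bound x
  have hp := Real.pi_pos
  have h3 : |1 / Real.pi * pot' f f' x| ≤ 20 * S ^ 2 := by
    rw [abs_mul, abs_of_pos (by positivity), one_div, inv_mul_le_iff₀ hp]; linarith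
  unfold AA
  linarith [abs_add_le (hh f x) (1 / Real.pi * pot' f f' x)]

lemma fA_int (h : Nice f f' S) : Integrable (fun x => f x * AA f f' x) :=
  (bdd_mul_int h.int h.AA_meas h.AA_bound).congr (Eventually.of_forall fun x => mul_comm _ _)

lemma energy_zero (h : Nice f f' S) : ∫ x, f x * AA f f' x = 0 := by
  have i1 : Integrable (fun x => f x * hh f x) :=
    (bdd_mul_int h.int h.hh_meas h.hh_bound).congr (Eventually.of_forall fun x => mul_comm _ _)
  have i2 : Integrable (fun x => f x * pot' f f' x) :=
    (bdd_mul_int h.int h.pot'_meas h.potential_deriv_bound).congr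
      (Eventually.of_forall fun x => mul_comm _ _)
  have e : (fun x => f x * AA f f' x)
      = fun x => f x * hh f x + 1 / Real.pi * (f x * pot' f f' x) := by
    ext x; unfold AA; ring
  rw [e, integral_add i1 (i2.const_mul _), integral_const_mul, h.energy_h_one, h.energy_nl_one]
  simp

lemma energy_bound (h : Nice f f' S) {r M : ℝ} (hr : 1 ≤ r) (hM : ∫ x, f x ^ 2 ≤ M) :
    |∫ x, wR (r ^ 2) x * (f x * AA f f' x)| ≤
      2 * M + 1 / 2 * ((M + 2 * Real.pi) * (M + Real.pi)) + 100 * S ^ 2 * M := by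
  have hw : Cut (wR (r ^ 2)) (wR' (r ^ 2)) := wR_cut (by nlinarith)
  have hN : 0 ≤ ∫ x, f x ^ 2 := integral_nonneg fun x => sq_nonneg _
  have i1 : Integrable (fun x => wR (r ^ 2) x * f x * hh f x) :=
    (bdd_mul_int (h.wf_int hw) h.hh_meas h.hh_bound).congr
      (Eventually.of_forall fun x => mul_comm _ _)
  have i2 : Integrable (fun x => wR (r ^ 2) x * f x * pot' f f' x) :=
    (bdd_mul_int (h.wf_int hw) h.pot'_meas h.potential_deriv_bound).congr
      (Eventually.of_forall fun x => mul_comm _ _)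
  have e : (fun x => wR (r ^ 2) x * (f x * AA f f' x))
      = fun x => wR (r ^ 2) x * f x * hh f x + 1 / Real.pi * (wR (r ^ 2) x * f x * pot' f f' x) := by
    ext x; unfold AA; ring
  have hp := Real.pi_pos
  rw [e, integral_add i1 (i2.const_mul _), integral_const_mul]
  have b1 := h.energy_h_bound hr
  have b2 : |1 / Real.pi * ∫ x, wR (r ^ 2) x * f x * pot' f f' x|
      ≤ 100 * S ^ 2 * ∫ x, f x ^ 2 := by
    rw [abs_mul, abs_of_pos (by positivity), one_div, inv_mul_le_iff₀ hp]
    linarith [h.energy_nl_bound hw]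
  refine (abs_add_le _ _).trans (add_le_add (b1.trans ?_) (b2.trans ?_))
  · have : 0 ≤ M + 2 * Real.pi := by linarith
    gcongr
  · gcongr

lemma energy_tendsto (h : Nice f f' S) :
    Tendsto (fun n : ℕ => ∫ x, wR (((n : ℝ) + 1) ^ 2) x * (f x * AA f f' x)) atTop (nhds 0) := by
  rw [← h.energy_zero]
  have hw : ∀ n : ℕ, Cut (wR (((n : ℝ) + 1) ^ 2)) (wR' (((n : ℝ) + 1) ^ 2)) := fun n =>
    wR_cut (by nlinarith [(Nat.cast_nonneg n : (0 : ℝ) ≤ n)])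
  refine tendsto_integral_of_dominated_convergence (fun x => |f x * AA f f' x|)
    (fun n => ?_) h.fA_int.abs (fun n => ?_) ?_
  · have := (hw n).cont.measurable
    exact this.aestronglyMeasurable.mul h.fA_int.1
  · refine Eventually.of_forall fun x => ?_
    rw [norm_mul]
    exact mul_le_of_le_one_left (norm_nonneg _) ((hw n).abs_le1 x)
  · refine Eventually.of_forall fun x => ?_
    have h1 : Tendsto (fun n : ℕ => ((n : ℝ) + 1) ^ 2) atTop atTop :=
      (tendsto_pow_atTop two_ne_zero).comp
        (tendsto_atTop_add_const_right _ _ tendsto_natCast_atTop_atTop)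
    simpa using ((wR_tendsto x).comp h1).mul_const (f x * AA f f' x)

end Nice

lemma schwartz_sup (f : SchwartzMap ℝ ℝ) (hd : ∀ x, |deriv f x| ≤ 1 / 2) {M : ℝ}
    (hM : ∫ x, f x ^ 2 ≤ M) (x : ℝ) : |f x| ≤ 1 + 2 * M := by
  have hN : 0 ≤ ∫ x, f x ^ 2 := integral_nonneg fun x => sq_nonneg _
  have hder : ∀ y, HasDerivAt f (deriv f y) y := fun y => f.differentiableAt.hasDerivAt
  have hm' : Continuous (deriv f) := (SchwartzMap.derivCLM ℝ ℝ f).continuous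
  have hsq : Integrable (fun y => f y ^ 2) := by
    have := Nice.bdd_mul_int f.integrable f.continuous.measurable
      (fun y => f.norm_le_seminorm ℝ y)
    simpa [sq] using this
  have hi : Integrable (fun y => 3 * f y ^ 2 * deriv f y) := by
    have := Nice.bdd_mul_int (hsq.const_mul 3) hm'.measurable hd
    exact this.congr (Eventually.of_forall fun y => mul_comm _ _)
  have hz : Tendsto (fun y => f y ^ 3) atBot (nhds 0) := by
    have h0 : Tendsto f atBot (nhds 0) :=
      (zero_at_infty f).mono_left atBot_le_cocompact
    simpa using h0.pow 3
  have h3 := integral_Iic_of_hasDerivAt_of_tendsto' (a := x) (f := fun y => f y ^ 3)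
    (f' := fun y => 3 * f y ^ 2 * deriv f y)
    (fun y _ => ((hder y).pow 3).congr_deriv (by norm_num)) hi.integrableOn hz
  have hb : |f x ^ 3| ≤ 3 / 2 * M := by
    rw [sub_zero] at h3
    rw [← h3]
    have := norm_integral_le_of_norm_le (μ := volume.restrict (Set.Iic x))
      (f := fun y => 3 * f y ^ 2 * deriv f y)
      (hsq.const_mul (3 / 2)).restrict
      (Eventually.of_forall fun y => by
        rw [norm_mul, Real.norm_eq_abs, Real.norm_eq_abs, abs_of_nonneg (by positivity)]
        nlinarith [hd y, sq_nonneg (f y)])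
    refine this.trans ((setIntegral_le_integral (hsq.const_mul _)
      (Eventually.of_forall fun y => ?_)).trans ?_)
    · simp only [Pi.zero_apply]; positivity
    · rw [integral_const_mul]; linarith
  rw [abs_pow] at hb
  by_contra hc
  push Not at hc
  have hM0 : 0 ≤ M := hN.trans hM
  have : (1 + 2 * M) ^ 3 < |f x| ^ 3 := by gcongr
  nlinarith [pow_nonneg hM0 3, pow_nonneg hM0 2]

lemma schwartz_nice (f : SchwartzMap ℝ ℝ) (hd : ∀ x, |deriv f x| ≤ 1 / 2) {M : ℝ}
    (hM : ∫ x, f x ^ 2 ≤ M) : Nice f (deriv f) (1 + 2 * M) where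
  der y := f.differentiableAt.hasDerivAt
  cont' := (SchwartzMap.derivCLM ℝ ℝ f).continuous
  b' := hd
  bS := schwartz_sup f hd hM
  S1 := by
    have hN : 0 ≤ ∫ x, f x ^ 2 := integral_nonneg fun x => sq_nonneg _
    linarith
  int := f.integrable
  int' := (SchwartzMap.derivCLM ℝ ℝ f).integrable

lemma wR_limit {q : ℝ → ℝ} (hq : Integrable q) :
    Tendsto (fun n : ℕ => ∫ x, wR (((n : ℝ) + 1) ^ 2) x * q x) atTop (nhds (∫ x, q x)) := by
  have hw : ∀ n : ℕ, Cut (wR (((n : ℝ) + 1) ^ 2)) (wR' (((n : ℝ) + 1) ^ 2)) := fun n =>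
    wR_cut (by nlinarith [(Nat.cast_nonneg n : (0 : ℝ) ≤ n)])
  refine tendsto_integral_of_dominated_convergence (fun x => |q x|)
    (fun n => ?_) hq.abs (fun n => ?_) ?_
  · have := (hw n).cont.measurable
    exact this.aestronglyMeasurable.mul hq.1
  · refine Eventually.of_forall fun x => ?_
    rw [norm_mul]
    exact mul_le_of_le_one_left (norm_nonneg _) ((hw n).abs_le1 x)
  · refine Eventually.of_forall fun x => ?_
    have h1 : Tendsto (fun n : ℕ => ((n : ℝ) + 1) ^ 2) atTop atTop :=
      (tendsto_pow_atTop two_ne_zero).comp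
        (tendsto_atTop_add_const_right _ _ tendsto_natCast_atTop_atTop)
    simpa using ((wR_tendsto x).comp h1).mul_const (q x)

lemma theoremB (f : ℝ → SchwartzMap ℝ ℝ) {s t M : ℝ} (hst : s ≤ t)
    (hd : ∀ τ ∈ Set.Icc s t, ∀ x, |deriv (f τ) x| ≤ 1 / 2)
    (heq : ∀ τ ∈ Set.Icc s t, ∀ x,
      HasDerivAt (fun σ => f σ x) (AA (f τ) (deriv (f τ)) x) τ)
    (hM : ∀ τ ∈ Set.Icc s t, ∫ x, f τ x ^ 2 ≤ M) :
    ∫ x, f s x ^ 2 = ∫ x, f t x ^ 2 := by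
  set S := 1 + 2 * M with hS
  have nice : ∀ τ ∈ Set.Icc s t, Nice (f τ) (deriv (f τ)) S := fun τ hτ =>
    schwartz_nice (f τ) (hd τ hτ) (hM τ hτ)
  set F : ℝ → ℝ → ℝ := fun ξ τ => f (Set.projIcc s t hst τ) ξ with hF
  have hs : s ∈ Set.Icc s t := Set.left_mem_Icc.2 hst
  have ht : t ∈ Set.Icc s t := Set.right_mem_Icc.2 hst
  have hFeq : ∀ τ ∈ Set.Icc s t, ∀ ξ, F ξ τ = f τ ξ := fun τ hτ ξ => by
    simp only [hF, Set.projIcc_of_mem hst hτ]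
  have hFb : ∀ ξ τ, |F ξ τ| ≤ S := fun ξ τ => (nice _ (Set.projIcc s t hst τ).2).bS ξ
  have hF2 : ∀ ξ, Continuous (F ξ) := fun ξ => by
    have h1 : ContinuousOn (fun σ => f σ ξ) (Set.Icc s t) := fun τ hτ =>
      (heq τ hτ ξ).continuousAt.continuousWithinAt
    exact h1.domRestrict.comp continuous_projIcc
  have hFc : Continuous (Function.uncurry F) := by
    refine continuous_prod_of_continuous_lipschitzWith (Function.uncurry F) (1 / 2)
      (fun ξ => hF2 ξ) (fun τ => ?_)
    refine LipschitzWith.of_dist_le_mul fun a b => ?_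
    have := (nice _ (Set.projIcc s t hst τ).2).lip a b
    simpa [Real.dist_eq, hF] using this
  set G : ℝ × ℝ → ℝ := (Set.univ ×ˢ Set.Ioo s t).indicator (fun p => deriv (F p.1) p.2) with hG
  have hGm : Measurable G :=
    (measurable_deriv_with_param hFc).indicator (MeasurableSet.univ.prod measurableSet_Ioo)
  have hder : ∀ τ ∈ Set.Ioo s t, ∀ ξ,
      HasDerivAt (F ξ) (AA (f τ) (deriv (f τ)) ξ) τ := fun τ hτ ξ => by
    refine (heq τ (Set.Ioo_subset_Icc_self hτ) ξ).congr_of_eventuallyEq ?_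
    filter_upwards [Ioo_mem_nhds hτ.1 hτ.2] with σ hσ
    exact hFeq σ (Set.Ioo_subset_Icc_self hσ) ξ
  have hGeq : ∀ τ ∈ Set.Ioo s t, ∀ ξ, G (ξ, τ) = AA (f τ) (deriv (f τ)) ξ := fun τ hτ ξ => by
    rw [hG, Set.indicator_of_mem (by exact ⟨trivial, hτ⟩)]
    exact (hder τ hτ ξ).deriv
  set C1 := 2 * Real.pi + M + 20 * S ^ 2 with hC1
  have hM0 : 0 ≤ M := (integral_nonneg fun x => sq_nonneg _).trans (hM s hs)
  have hS0 : 0 < S := by linarith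
  have hC10 : 0 ≤ C1 := by have := Real.pi_pos; positivity
  have hGb : ∀ p, |G p| ≤ C1 := by
    rintro ⟨ξ, τ⟩
    by_cases hτ : τ ∈ Set.Ioo s t
    · rw [hGeq τ hτ]
      have hτ' := Set.Ioo_subset_Icc_self hτ
      have := (nice τ hτ').AA_bound ξ
      linarith [hM τ hτ']
    · rw [hG, Set.indicator_of_notMem (by exact fun hh => hτ hh.2), abs_zero]
      exact hC10
  set P : ℝ × ℝ → ℝ := fun p => 2 * (F p.1 p.2 * G p) with hP
  have hPm : Measurable P := (hFc.measurable.mul hGm).const_mul 2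
  have hPb : ∀ p, |P p| ≤ 2 * (S * C1) := fun p => by
    rw [hP]
    simp only [abs_mul, abs_two]
    gcongr
    · exact hFb _ _
    · exact hGb _
  have hFTC : ∀ ξ, ∫ τ in Set.Ioo s t, P (ξ, τ) = f t ξ ^ 2 - f s ξ ^ 2 := fun ξ => by
    have hPi : IntegrableOn (fun τ => P (ξ, τ)) (Set.Ioo s t) := by
      refine Integrable.mono' (g := fun _ => 2 * (S * C1)) (integrable_const _)
        (hPm.comp (by fun_prop)).aestronglyMeasurable (Eventually.of_forall fun τ => hPb _)
    have := intervalIntegral.integral_eq_sub_of_hasDerivAt_of_le hst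
      (f := fun τ => F ξ τ ^ 2) (f' := fun τ => P (ξ, τ)) ((hF2 ξ).pow 2).continuousOn
      (fun τ hτ => by
        refine ((hder τ hτ ξ).pow 2).congr_deriv ?_
        simp only [hP, hGeq τ hτ]; norm_num; ring)
      ((intervalIntegrable_iff_integrableOn_Ioo_of_le hst).2 hPi)
    rw [intervalIntegral.integral_of_le hst, integral_Ioc_eq_integral_Ioo, hFeq t ht, hFeq s hs]
      at this
    exact this
  have hprod : ∀ n : ℕ, Integrable (fun p : ℝ × ℝ => wR (((n : ℝ) + 1) ^ 2) p.1 * P p)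
      ((volume : Measure ℝ).prod (volume.restrict (Set.Ioo s t))) := fun n => by
    have hR : (0 : ℝ) < ((n : ℝ) + 1) ^ 2 := by positivity
    have hi : Integrable (fun p : ℝ × ℝ => wR (((n : ℝ) + 1) ^ 2) p.1)
      ((volume : Measure ℝ).prod (volume.restrict (Set.Ioo s t))) :=
      (wR_int hR).comp_fst _
    have := hi.bdd_mul (c := 2 * (S * C1)) (f := P) hPm.aestronglyMeasurable
      (Eventually.of_forall hPb)
    exact this.congr (Eventually.of_forall fun p => mul_comm _ _)
  have hsw : ∀ n : ℕ, ∫ ξ, wR (((n : ℝ) + 1) ^ 2) ξ * (f t ξ ^ 2 - f s ξ ^ 2)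
      = ∫ τ in Set.Ioo s t, ∫ ξ, wR (((n : ℝ) + 1) ^ 2) ξ * P (ξ, τ) := fun n => by
    rw [← integral_integral_swap (f := fun ξ τ => wR (((n : ℝ) + 1) ^ 2) ξ * P (ξ, τ)) (hprod n)]
    congr 1; ext ξ
    rw [integral_const_mul, hFTC]
  have hQeq : ∀ n : ℕ, ∀ τ ∈ Set.Ioo s t, ∫ ξ, wR (((n : ℝ) + 1) ^ 2) ξ * P (ξ, τ)
      = 2 * ∫ ξ, wR (((n : ℝ) + 1) ^ 2) ξ * (f τ ξ * AA (f τ) (deriv (f τ)) ξ) := by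
    intro n τ hτ
    rw [← integral_const_mul]
    congr 1; ext ξ
    simp only [hP, hGeq τ hτ, hFeq τ (Set.Ioo_subset_Icc_self hτ)]
    ring
  have lim0 : Tendsto (fun n : ℕ => ∫ τ in Set.Ioo s t, ∫ ξ, wR (((n : ℝ) + 1) ^ 2) ξ * P (ξ, τ))
      atTop (nhds (∫ τ in Set.Ioo s t, (0 : ℝ))) := by
    refine tendsto_integral_of_dominated_convergence
      (fun _ => 2 * (2 * M + 1 / 2 * ((M + 2 * Real.pi) * (M + Real.pi)) + 100 * S ^ 2 * M))
      (fun n => (hprod n).integral_prod_right.1) (integrable_const _) (fun n => ?_) ?_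
    · refine (ae_restrict_iff' measurableSet_Ioo).2 (Eventually.of_forall fun τ hτ => ?_)
      have hτ' := Set.Ioo_subset_Icc_self hτ
      rw [hQeq n τ hτ, norm_mul, Real.norm_two]
      gcongr
      exact (nice τ hτ').energy_bound (by linarith [(Nat.cast_nonneg n : (0 : ℝ) ≤ n)]) (hM τ hτ')
    · refine (ae_restrict_iff' measurableSet_Ioo).2 (Eventually.of_forall fun τ hτ => ?_)
      have hτ' := Set.Ioo_subset_Icc_self hτ
      have := ((nice τ hτ').energy_tendsto).const_mul 2
      rw [mul_zero] at this
      refine this.congr fun n => (hQeq n τ hτ).symm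
  have lim1 := wR_limit ((nice t ht).sq_int.sub (nice s hs).sq_int)
  simp only [Pi.sub_apply, hsw] at lim1
  have := tendsto_nhds_unique lim1 lim0
  rw [integral_sub (nice t ht).sq_int (nice s hs).sq_int] at this
  simp at this
  linarith

lemma baire_conservation (N : ℝ → ℝ) {a b : ℝ} (hab : a ≤ b)
    (hcl : ∀ n : ℕ, IsClosed {t | t ∈ Set.Icc a b ∧ N t ≤ n})
    (hB : ∀ s t, a ≤ s → s ≤ t → t ≤ b → (∃ M, ∀ τ ∈ Set.Icc s t, N τ ≤ M) → N s = N t) :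
    N a = N b := by
  set K := Set.Icc a b with hK
  let LB : ℝ → Prop := fun x => ∃ M, ∀ᶠ τ in nhdsWithin x K, N τ ≤ M
  have hcomp : ∀ s t, a ≤ s → t ≤ b → (∀ x ∈ Set.Icc s t, LB x) →
      ∃ M, ∀ τ ∈ Set.Icc s t, N τ ≤ M := by
    intro s t has htb hx
    refine (isCompact_Icc (a := s) (b := t)).induction_on
      (p := fun A => ∃ M, ∀ τ ∈ A, N τ ≤ M) ⟨0, by simp⟩ ?_ ?_ ?_
    · rintro A B hAB ⟨M, hM⟩
      exact ⟨M, fun τ hτ => hM τ (hAB hτ)⟩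
    · rintro A B ⟨M, hM⟩ ⟨M', hM'⟩
      refine ⟨max M M', fun τ hτ => ?_⟩
      rcases hτ with h | h
      · exact (hM τ h).trans (le_max_left _ _)
      · exact (hM' τ h).trans (le_max_right _ _)
    · intro x hxm
      obtain ⟨M, hM⟩ := hx x hxm
      refine ⟨{τ | N τ ≤ M}, ?_, M, fun τ hτ => hτ⟩
      exact nhdsWithin_mono x (Set.Icc_subset_Icc has htb) hM
  set E := {x | x ∈ K ∧ ¬ LB x} with hE
  have hEcl : IsClosed E := by
    refine isClosed_of_closure_subset fun x hx => ?_
    have hxK : x ∈ K := isClosed_Icc.closure_subset_iff.2 (fun y hy => hy.1) hx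
    refine ⟨hxK, ?_⟩
    rintro ⟨M, hM⟩
    have h1 : ∀ᶠ y in nhdsWithin x K, LB y :=
      (eventually_eventually_nhdsWithin.2 hM).mono fun y hy => ⟨M, hy⟩
    have h2 := mem_closure_iff_frequently.1 hx
    rw [eventually_nhdsWithin_iff] at h1
    obtain ⟨y, hy1, hy2⟩ := (h2.and_eventually h1).exists
    exact hy1.2 (hy2 hy1.1)
  by_cases hne : E.Nonempty
  swap
  · refine hB a b le_rfl hab le_rfl (hcomp a b le_rfl le_rfl fun x hx => ?_)
    by_contra hc
    exact hne ⟨x, hx, hc⟩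
  exfalso
  have : Nonempty E := hne.to_subtype
  have : CompleteSpace E := hEcl.completeSpace_coe
  obtain ⟨n, ⟨e0, he0⟩⟩ := nonempty_interior_of_iUnion_of_closed
    (f := fun n : ℕ => {e : E | N e ≤ n})
    (fun n => by
      have := (hcl n).preimage (continuous_subtype_val (p := fun x => x ∈ E))
      convert this using 1
      ext e
      exact ⟨fun h => ⟨e.2.1, h⟩, fun h => h.2⟩)
    (by
      ext e
      simp only [Set.mem_iUnion, Set.mem_univ, iff_true]
      exact exists_nat_ge (N e))
  obtain ⟨δ, hδ, hball⟩ := Metric.mem_nhds_iff.1 (mem_interior_iff_mem_nhds.1 he0)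
  have hEn : ∀ e ∈ E, |e - e0| < δ → N e ≤ n := fun e he hd =>
    hball (show (⟨e, he⟩ : E) ∈ Metric.ball e0 δ from hd)
  have hE0 := e0.2
  have claim : ∀ t ∈ K, |t - e0| < δ → N t ≤ n := by
    intro t ht htd
    rcases le_total (e0 : ℝ) t with hle | hle
    · obtain ⟨c, hc, hcm⟩ := ((isCompact_Icc (a := (e0 : ℝ)) (b := t)).inter_left hEcl).exists_isGreatest
        ⟨e0, hE0, Set.left_mem_Icc.2 hle⟩
      have hNc : N c ≤ n := hEn c hc.1 (by
        rw [abs_of_nonneg (by linarith [hc.2.1])]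
        rw [abs_of_nonneg (by linarith)] at htd
        linarith [hc.2.2])
      have hac : a ≤ c := hc.1.1.1
      have hs : ∀ s ∈ Set.Ioc c t, N s = N t := fun s hs => by
        refine hB s t (by linarith [hs.1]) hs.2 ht.2 (hcomp s t (by linarith [hs.1]) ht.2 ?_)
        intro x hx
        by_contra hcx
        have := hcm ⟨⟨⟨by linarith [hs.1, hx.1], hx.2.trans ht.2⟩, hcx⟩,
          by linarith [hs.1, hx.1, hc.2.1], hx.2⟩
        linarith [hs.1, hx.1]
      have := hB c t hac hc.2.2 ht.2 ⟨max (N c) (N t), fun τ hτ => by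
        rcases eq_or_lt_of_le hτ.1 with h | h
        · rw [← h]; exact le_max_left _ _
        · rw [hs τ ⟨h, hτ.2⟩]; exact le_max_right _ _⟩
      linarith
    · obtain ⟨c, hc, hcm⟩ := ((isCompact_Icc (a := t) (b := (e0 : ℝ))).inter_left hEcl).exists_isLeast
        ⟨e0, hE0, Set.right_mem_Icc.2 hle⟩
      have hNc : N c ≤ n := hEn c hc.1 (by
        rw [abs_of_nonpos (by linarith [hc.2.2])]
        rw [abs_of_nonpos (by linarith)] at htd
        linarith [hc.2.1])
      have hcb : c ≤ b := hc.1.1.2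
      have hs : ∀ s ∈ Set.Ico t c, N t = N s := fun s hs => by
        refine hB t s ht.1 hs.1 (by linarith [hs.2]) (hcomp t s ht.1 (by linarith [hs.2]) ?_)
        intro x hx
        by_contra hcx
        have := hcm ⟨⟨⟨ht.1.trans hx.1, by linarith [hs.2, hx.2]⟩, hcx⟩,
          hx.1, by linarith [hs.2, hx.2, hc.2.2]⟩
        linarith [hs.2, hx.2]
      have := hB t c ht.1 hc.2.1 hcb ⟨max (N c) (N t), fun τ hτ => by
        rcases eq_or_lt_of_le hτ.2 with h | h
        · rw [h]; exact le_max_left _ _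
        · rw [← hs τ ⟨hτ.1, h⟩]; exact le_max_right _ _⟩
      linarith
  refine hE0.2 ⟨n, ?_⟩
  rw [eventually_nhdsWithin_iff]
  filter_upwards [Metric.ball_mem_nhds (e0 : ℝ) hδ] with τ hτ hτK
  exact claim τ hτK hτ

lemma closed_level (f : ℝ → SchwartzMap ℝ ℝ) {a b : ℝ}
    (hc : ∀ τ ∈ Set.Icc a b, ∀ x, ContinuousAt (fun σ => f σ x) τ) (n : ℕ) :
    IsClosed {t | t ∈ Set.Icc a b ∧ ∫ x, f t x ^ 2 ≤ n} := by
  have hsq : ∀ t, Integrable (fun y => f t y ^ 2) := fun t => by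
    have := Nice.bdd_mul_int (f t).integrable (f t).continuous.measurable
      (fun y => (f t).norm_le_seminorm ℝ y)
    simpa [sq] using this
  refine IsSeqClosed.isClosed fun u t hu hut => ?_
  have ht : t ∈ Set.Icc a b := isClosed_Icc.mem_of_tendsto hut (Eventually.of_forall fun k => (hu k).1)
  refine ⟨ht, ?_⟩
  have hlim : ∀ x, Tendsto (fun k => ENNReal.ofReal (f (u k) x ^ 2)) atTop
      (nhds (ENNReal.ofReal (f t x ^ 2))) := fun x =>
    ENNReal.tendsto_ofReal ((((hc t ht x).tendsto).comp hut).pow 2)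
  have hle : ∀ t, ∫⁻ x, ENNReal.ofReal (f t x ^ 2) = ENNReal.ofReal (∫ x, f t x ^ 2) := fun t =>
    (ofReal_integral_eq_lintegral_ofReal (hsq t)
      (Eventually.of_forall fun x => sq_nonneg _)).symm
  have fatou : ∫⁻ x, ENNReal.ofReal (f t x ^ 2) ≤ n := by
    calc ∫⁻ x, ENNReal.ofReal (f t x ^ 2)
        = ∫⁻ x, liminf (fun k => ENNReal.ofReal (f (u k) x ^ 2)) atTop := by
          congr 1; ext x; exact (hlim x).liminf_eq.symm
      _ ≤ liminf (fun k => ∫⁻ x, ENNReal.ofReal (f (u k) x ^ 2)) atTop :=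
          lintegral_liminf_le fun k => by
            have := (f (u k)).continuous.measurable
            fun_prop
      _ ≤ n := by
          refine liminf_le_of_le (by isBoundedDefault) fun c hcc => ?_
          obtain ⟨k, hk⟩ := hcc.exists
          refine hk.trans ?_
          rw [hle]
          exact ENNReal.ofReal_le_of_le_toReal (by simpa using (hu k).2)
  rw [hle] at fatou
  have := (ENNReal.ofReal_le_iff_le_toReal (by simp)).1 fatou
  simpa using this

lemma conserve (f : ℝ → SchwartzMap ℝ ℝ) {s t : ℝ} (hst : s ≤ t)
    (hd : ∀ τ ∈ Set.Icc s t, ∀ x, |deriv (f τ) x| ≤ 1 / 2)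
    (heq : ∀ τ ∈ Set.Icc s t, ∀ x,
      HasDerivAt (fun σ => f σ x) (AA (f τ) (deriv (f τ)) x) τ) :
    ∫ x, f s x ^ 2 = ∫ x, f t x ^ 2 := by
  refine baire_conservation (fun τ => ∫ x, f τ x ^ 2) hst
    (closed_level f fun τ hτ x => (heq τ hτ x).continuousAt) ?_
  rintro s' t' h1 h2 h3 ⟨M, hM⟩
  have hsub : Set.Icc s' t' ⊆ Set.Icc s t := Set.Icc_subset_Icc h1 h3
  exact theoremB f h2 (fun τ hτ => hd τ (hsub hτ)) (fun τ hτ => heq τ (hsub hτ)) hM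

theorem L2_conservation_transformed_equation (ε : ℝ) (hε : ε ≠ 0)
    (I : Set ℝ) (hI : I.OrdConnected)
    (g : ℝ → SchwartzMap ℝ ℝ) (Hg : ℝ → ℝ → ℝ)
    (hH : ∀ t ∈ I, IsHilbertTransform (fun ξ => g t ξ) (Hg t))
    (hsmall : ∀ t ∈ I, ∀ ξ : ℝ, |ε * deriv (fun z => g t z) ξ| ≤ 1 / 2)
    (heq : ∀ t ∈ I, ∀ ξ : ℝ,
      HasDerivAt (fun s => g s ξ)
        (Hg t ξ - (ε ^ 2 / Real.pi) *
          deriv (fun ζ : ℝ => ∫ t' : ℝ,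
            (ζ - t') * deriv (fun z => g t z) t' *
              (-(1 / ε ^ 2) * (Real.log (1 - ε * ((g t ζ - g t t') / (ζ - t'))) +
                ε * ((g t ζ - g t t') / (ζ - t'))))) ξ) t) :
    ∀ t₁ ∈ I, ∀ t₂ ∈ I,
      (∫ ξ : ℝ, (g t₁ ξ) ^ 2) = ∫ ξ : ℝ, (g t₂ ξ) ^ 2 := by
  set f : ℝ → SchwartzMap ℝ ℝ := fun t => ε • g t with hf
  have hfx : ∀ t x, f t x = ε * g t x := fun t x => rfl
  have hdg : ∀ t x, deriv (f t) x = ε * deriv (fun z => g t z) x := fun t x => by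
    have : (f t : ℝ → ℝ) = fun z => ε * g t z := funext fun z => hfx t z
    rw [this, deriv_const_mul_field]
  have hd : ∀ t ∈ I, ∀ x, |deriv (f t) x| ≤ 1 / 2 := fun t ht x => by
    rw [hdg]; exact hsmall t ht x
  have hfe : ∀ t ∈ I, ∀ x, HasDerivAt (fun σ => f σ x) (AA (f t) (deriv (f t)) x) t := by
    intro t ht x
    have hn := schwartz_nice (f t) (hd t ht) le_rfl
    have hHf : IsHilbertTransform (f t) (fun x => ε * Hg t x) := fun x => by
      have := (hH t ht x).const_mul ε
      refine this.congr fun δ => ?_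
      rw [mul_left_comm, ← integral_const_mul]
      congr 2; ext y
      rw [hfx]; ring
    have h1 := hn.hil hHf x
    have h2 : (fun ζ : ℝ => ∫ t' : ℝ,
            (ζ - t') * deriv (fun z => g t z) t' *
              (-(1 / ε ^ 2) * (Real.log (1 - ε * ((g t ζ - g t t') / (ζ - t'))) +
                ε * ((g t ζ - g t t') / (ζ - t')))))
        = fun ζ => -(1 / ε ^ 3) * Nice.pot (f t) ζ := by
      ext ζ
      rw [Nice.pot, ← hn.potential_eq ζ, ← integral_const_mul]
      congr 1; ext t'
      rw [hdg, hfx, hfx, mph, ← mul_sub, mul_div_assoc]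
      field_simp
    refine ((heq t ht x).const_mul ε).congr_deriv ?_
    rw [h2, ((hn.pot_deriv x).const_mul _).deriv, AA, ← h1]
    field_simp
    ring
  have main : ∀ t₁ ∈ I, ∀ t₂ ∈ I, t₁ ≤ t₂ →
      (∫ ξ : ℝ, (g t₁ ξ) ^ 2) = ∫ ξ : ℝ, (g t₂ ξ) ^ 2 := by
    intro t₁ h₁ t₂ h₂ hle
    have hsub := hI.out h₁ h₂
    have := conserve f hle (fun τ hτ => hd τ (hsub hτ)) (fun τ hτ => hfe τ (hsub hτ))
    simp only [hfx, mul_pow, integral_const_mul] at this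
    exact mul_left_cancel₀ (pow_ne_zero 2 hε) this
  intro t₁ h₁ t₂ h₂
  rcases le_total t₁ t₂ with h | h
  · exact main t₁ h₁ t₂ h₂ h
  · exact (main t₂ h₂ t₁ h₁ h).symm
end
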